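/- arXiv:1711.00180 — 2 statements merged into one kernel-verified Lean document; each statement's English description precedes it below -/
import Mathlib

section
/- For all positive integers x, y, m, n with x > y, if φ(x^m − y^m) = x^n − y^n, then m = 1, n = 1 and x = y + 1. -/
open Polynomial in
lemma eval_scale_X_pow_sub_one (x y : ℤ) (e : ℕ) (he : 0 < e) :
    ((X ^ e - 1 : ℤ[X]).scaleRoots y).eval x = x ^ e - y ^ e := by
  have h : (X ^ e - 1 : ℤ[X]).scaleRoots y = X ^ e - C (y ^ e) := by
    ext i
    have hdeg : (X ^ e - 1 : ℤ[X]).natDegree = e := by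
      simpa using natDegree_X_pow_sub_C (n := e) (r := (1:ℤ))
    rw [coeff_scaleRoots, hdeg]
    simp only [coeff_sub, coeff_X_pow, coeff_one, coeff_C]
    split_ifs with h1 h2 h2
    · omega
    · simp [h1]
    · simp [h2]
    · simp
  rw [h]; simp

lemma dvd_pow_sub_pow_iff {p x y : ℕ} (hp : p.Prime) (hy : ¬ p ∣ y) (h : y ≤ x) (k : ℕ) :
    p ∣ x ^ k - y ^ k ↔ ((x : ZMod p) * (y : ZMod p)⁻¹) ^ k = 1 := by
  have := Fact.mk hp
  have hy0 : (y : ZMod p) ≠ 0 := by rwa [Ne, ZMod.natCast_eq_zero_iff]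
  rw [← ZMod.natCast_eq_zero_iff, Nat.cast_sub (Nat.pow_le_pow_left h k), sub_eq_zero, mul_pow,
    inv_pow, ← div_eq_mul_inv, div_eq_one_iff_eq (pow_ne_zero _ hy0)]
  push_cast
  rfl

open Polynomial in
lemma zsigmondy_odd (x y d : ℕ) (hy : 0 < y) (hxy : y + 2 ≤ x) (hc : x.Coprime y) (hd : Odd d)
    (hd3 : 3 ≤ d) :
    ∃ p : ℕ, p.Prime ∧ ¬ p ∣ y ∧ orderOf ((x : ZMod p) * (y : ZMod p)⁻¹) = d := by
  by_contra hcon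
  push Not at hcon
  set F : ℤ := (scaleRoots (cyclotomic d ℤ) (y:ℤ)).eval (x:ℤ) with hF
  have hF1 : ∀ e, 0 < e → e ∣ d → e < d → ((x:ℤ)^e-(y:ℤ)^e)*F ∣ (x:ℤ)^d-(y:ℤ)^d := by
    intro e he hed hlt
    have h1 := X_pow_sub_one_mul_cyclotomic_dvd_X_pow_sub_one_of_dvd ℤ
      (Nat.mem_properDivisors.mpr ⟨hed, hlt⟩)
    have h2 := scaleRoots_dvd _ _ (r := (y:ℤ)) h1
    rw [mul_scaleRoots_of_noZeroDivisors] at h2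
    have h3 := map_dvd (evalRingHom (x:ℤ)) h2
    rw [map_mul] at h3
    simpa [eval_scale_X_pow_sub_one _ _ _ he, eval_scale_X_pow_sub_one _ _ d (by omega)] using h3
  have hFd : F ∣ (x:ℤ)^d-(y:ℤ)^d := (Dvd.intro_left _ rfl).trans (hF1 1 one_pos (one_dvd _) (by omega))
  have hFbig : (2:ℤ)^(Nat.totient d) < F := by
    have hy0 : (0:ℝ) < y := by exact_mod_cast hy
    have hxy' : (y:ℝ) + 2 ≤ x := by exact_mod_cast hxy
    have h1 := sub_one_pow_totient_lt_cyclotomic_eval (n := d) (q := (x:ℝ)/y) (by omega)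
      (by rw [lt_div_iff₀ hy0]; linarith)
    have h2 := scaleRoots_eval₂_mul (p := cyclotomic d ℤ) (Int.castRingHom ℝ) ((x:ℝ)/y) (y:ℤ)
    have h3 : (F:ℝ) = (y:ℝ)^(Nat.totient d) * (cyclotomic d ℝ).eval ((x:ℝ)/y) := by
      rw [← map_cyclotomic_int, eval_map]
      rw [natDegree_cyclotomic] at h2
      have e1 : (Int.castRingHom ℝ) (y:ℤ) = (y:ℝ) := by simp
      rw [e1, mul_div_cancel₀ _ hy0.ne'] at h2
      rw [← h2, hF]
      have := (eval₂_at_apply (p := scaleRoots (cyclotomic d ℤ) (y:ℤ)) (Int.castRingHom ℝ) (x:ℤ)).symm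
      simpa using this
    have h4 : (2:ℝ)^(Nat.totient d) < F := by
      rw [h3]
      calc (2:ℝ)^(Nat.totient d) ≤ ((y:ℝ) * ((x:ℝ)/y - 1))^(Nat.totient d) := by
            gcongr
            rw [mul_sub, mul_div_cancel₀ _ hy0.ne']; linarith
        _ < _ := by
            rw [mul_pow]
            gcongr
    exact_mod_cast h4
  have hroot : ∀ p : ℕ, p.Prime → (p:ℤ) ∣ F → ¬ p ∣ y ∧
      (cyclotomic d (ZMod p)).IsRoot ((x : ZMod p) * (y : ZMod p)⁻¹) := by
    intro p hp hpF
    have := Fact.mk hp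
    have hpy : ¬ p ∣ y := by
      intro h
      have h1 := hpF.trans hFd
      have h2 : (p:ℤ) ∣ (y:ℤ)^d := dvd_pow (by exact_mod_cast h) (by omega)
      have h3 : (p:ℤ) ∣ (x:ℤ)^d := by simpa using dvd_add h1 h2
      have h4 : p ∣ x := hp.dvd_of_dvd_pow (by exact_mod_cast h3 : p ∣ x^d)
      exact Nat.not_coprime_of_dvd_of_dvd hp.one_lt h4 h hc
    refine ⟨hpy, ?_⟩
    have hy0 : (y : ZMod p) ≠ 0 := by rwa [Ne, ZMod.natCast_eq_zero_iff]
    have h2 := scaleRoots_eval₂_mul (p := cyclotomic d ℤ) (Int.castRingHom (ZMod p))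
      ((x : ZMod p) * (y : ZMod p)⁻¹) (y:ℤ)
    have e1 : (Int.castRingHom (ZMod p)) (y:ℤ) = (y:ZMod p) := by simp
    have e2 : (y:ZMod p) * ((x : ZMod p) * (y : ZMod p)⁻¹) = x := by field_simp
    rw [e1, e2] at h2
    have h3 := (eval₂_at_apply (p := scaleRoots (cyclotomic d ℤ) (y:ℤ)) (Int.castRingHom (ZMod p)) (x:ℤ))
    have h4 : (F : ZMod p) = 0 := by rwa [ZMod.intCast_zmod_eq_zero_iff_dvd]
    have h5 : (y:ZMod p)^(natDegree (cyclotomic d ℤ)) * eval₂ (Int.castRingHom (ZMod p)) ((x : ZMod p) * (y : ZMod p)⁻¹) (cyclotomic d ℤ) = 0 := by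
      rw [← h2, ← h4, hF]; simpa using h3
    rw [IsRoot.def, ← map_cyclotomic_int, eval_map]
    exact (mul_eq_zero.mp h5).resolve_left (pow_ne_zero _ hy0)
  have hstr : ∀ p : ℕ, p.Prime → (p:ℤ) ∣ F → ¬ p ∣ y ∧ ∃ k e : ℕ, 0 < k ∧ d = p ^ k * e ∧ ¬ p ∣ e ∧
      orderOf ((x : ZMod p) * (y : ZMod p)⁻¹) = e ∧ e ∣ p - 1 := by
    intro p hp hpF
    have := Fact.mk hp
    obtain ⟨hpy, hr⟩ := hroot p hp hpF
    obtain ⟨k, e, hpe, hde⟩ := Nat.exists_eq_pow_mul_and_not_dvd (n := d) (by omega) p hp.ne_one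
    have : NeZero (e : ZMod p) := ⟨by rwa [Ne, ZMod.natCast_eq_zero_iff]⟩
    rw [hde] at hr
    have hprim := isRoot_cyclotomic_prime_pow_mul_iff_of_charP.mp hr
    have hord := hprim.eq_orderOf
    refine ⟨hpy, k, e, ?_, hde, hpe, hord.symm, ?_⟩
    · rcases Nat.eq_zero_or_pos k with h | h
      · exfalso
        apply hcon p hp hpy
        rw [← hord, hde, h]; simp
      · exact h
    · rw [hord]
      apply ZMod.orderOf_dvd_card_sub_one
      intro h
      have h1 := hprim.pow_eq_one
      have he0 : e ≠ 0 := by rintro rfl; simp at hpe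
      rw [h, zero_pow he0] at h1
      exact zero_ne_one h1
  have hF2 : 2 ≤ F := by
    have : (1:ℤ) ≤ 2 ^ (Nat.totient d) := one_le_pow₀ (by norm_num)
    omega
  obtain ⟨f, hf⟩ : ∃ f : ℕ, F = f := ⟨F.toNat, by omega⟩
  rw [hf] at hF1 hFbig hstr hF2
  clear_value F
  have hf2 : 2 ≤ f := by exact_mod_cast hF2
  obtain ⟨p, hp, hpf⟩ := Nat.exists_prime_and_dvd (n := f) (by omega)
  have := Fact.mk hp
  obtain ⟨hpy, k, e, hk, hde, hpe, hord, hep⟩ := hstr p hp (by exact_mod_cast hpf)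
  have huniq : ∀ {r : ℕ}, r.Prime → r ∣ f → r = p := by
    intro r hr hrf
    by_contra hne
    obtain ⟨hry, k', e', hk', hde', hre', hord', her⟩ := hstr r hr (by exact_mod_cast hrf)
    have hrd : r ∣ p ^ k * e := by
      rw [← hde, hde']; exact Dvd.dvd.mul_right (dvd_pow_self _ hk'.ne') _
    have hpd : p ∣ r ^ k' * e' := by
      rw [← hde', hde]; exact Dvd.dvd.mul_right (dvd_pow_self _ hk.ne') _
    have h1 : r ∣ e := by
      rcases hr.dvd_mul.mp hrd with h | h
      · exact absurd ((Nat.prime_dvd_prime_iff_eq hr hp).mp (hr.dvd_of_dvd_pow h)) hne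
      · exact h
    have h2 : p ∣ e' := by
      rcases hp.dvd_mul.mp hpd with h | h
      · exact absurd ((Nat.prime_dvd_prime_iff_eq hp hr).mp (hp.dvd_of_dvd_pow h)).symm hne
      · exact h
    have h3 := Nat.le_of_dvd (by have := hp.two_le; omega) (h1.trans hep)
    have h4 := Nat.le_of_dvd (by have := hr.two_le; omega) (h2.trans her)
    have := hp.two_le
    omega
  have hpd : p ∣ d := by rw [hde]; exact Dvd.dvd.mul_right (dvd_pow_self _ hk.ne') _
  have hpodd : Odd p := Odd.of_dvd_nat hd hpd
  obtain ⟨t, ht⟩ := hpd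
  have ht0 : 0 < t := by
    rcases Nat.eq_zero_or_pos t with h | h
    · subst h; omega
    · exact h
  have htd : t < d := by rw [ht]; have := hp.two_le; nlinarith
  have het : e ∣ t := by
    have : p ^ (k - 1) * e = t := by
      have h1 : p * (p ^ (k-1) * e) = p * t := by
        rw [← ht, hde, ← mul_assoc, ← pow_succ']; congr 2; omega
      exact Nat.eq_of_mul_eq_mul_left hp.pos h1
    exact ⟨p ^ (k-1), by rw [← this, mul_comm]⟩
  have hnp2 : ¬ p ^ 2 ∣ f := by
    intro h2
    have h3 := hF1 t ht0 ⟨p, by rw [ht, mul_comm]⟩ htd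
    have hlt : y ^ t < x ^ t := Nat.pow_lt_pow_left (by omega) ht0.ne'
    have hltd : y ^ d < x ^ d := Nat.pow_lt_pow_left (by omega) (by omega)
    have h4 : (x ^ t - y ^ t) * f ∣ x ^ d - y ^ d := by
      zify [hlt.le, hltd.le]; exact h3
    have h5 : p ∣ x ^ t - y ^ t := by
      rw [dvd_pow_sub_pow_iff hp hpy (by omega), ← orderOf_dvd_iff_pow_eq_one, hord]; exact het
    have hpx : ¬ p ∣ x ^ t := by
      intro h
      have h6 := (Nat.dvd_sub_iff_right hlt.le h).mp h5
      exact hpy (hp.dvd_of_dvd_pow h6)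
    have h7 := padicValNat.pow_sub_pow (p := p) hpodd hlt h5 hpx (n := p) hp.ne_zero
    rw [← pow_mul, ← pow_mul, mul_comm t p, ← ht, padicValNat_self] at h7
    have h8 : p ^ (padicValNat p (x^t-y^t) + 2) ∣ x ^ d - y ^ d := by
      rw [pow_add]
      exact (mul_dvd_mul pow_padicValNat_dvd h2).trans h4
    rw [padicValNat_dvd_iff_le (by omega)] at h8
    omega
  have hfp := Nat.eq_prime_pow_of_unique_prime_dvd (n := f) (by omega) huniq
  have hlen : f.primeFactorsList.length < 2 := by
    by_contra h
    apply hnp2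
    rw [hfp]
    exact pow_dvd_pow _ (by omega)
  have hfle : f ≤ p := by
    rw [hfp]
    calc p ^ f.primeFactorsList.length ≤ p ^ 1 := Nat.pow_le_pow_right hp.pos (by omega)
      _ = p := pow_one p
  have hphi : p - 1 ≤ Nat.totient d := by
    rw [← Nat.totient_prime hp]
    exact Nat.le_of_dvd (Nat.totient_pos.mpr (by omega)) (Nat.totient_dvd_of_dvd ⟨t, ht⟩)
  have h9 : 2 ^ (Nat.totient d) < f := by exact_mod_cast hFbig
  have h10 : 2 ^ (p-1) ≤ 2 ^ (Nat.totient d) := Nat.pow_le_pow_right (by norm_num) hphi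
  have h11 : p - 1 < 2 ^ (p-1) := Nat.lt_two_pow_self
  omega
lemma sum_inv_le_log (J : Finset ℕ) (hJ : ∀ j ∈ J, 0 < j) :
    ∑ j ∈ J, (1 / (j : ℝ)) ≤ Real.log (2 * (J.card : ℝ) + 1) := by
  induction J using Finset.induction_on_max with
  | empty => simp
  | insert a s hmax ih =>
    have ha : a ∉ s := fun h => lt_irrefl _ (hmax a h)
    rw [Finset.sum_insert ha, Finset.card_insert_of_notMem ha]
    have ih' := ih (fun j hj => hJ j (Finset.mem_insert_of_mem hj))
    have hcard : s.card + 1 ≤ a := by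
      have hsub : s ⊆ Finset.Ico 1 a := by
        intro j hj
        rw [Finset.mem_Ico]
        exact ⟨hJ j (Finset.mem_insert_of_mem hj), hmax j hj⟩
      have h1 := Finset.card_le_card hsub
      have h2 := hJ a (Finset.mem_insert_self _ _)
      rw [Nat.card_Ico] at h1
      omega
    set k : ℝ := (s.card : ℝ) with hk
    have hk0 : 0 ≤ k := by positivity
    have hak : k + 1 ≤ (a:ℝ) := by rw [hk]; exact_mod_cast hcard
    have h1 : 1 / (a:ℝ) ≤ 1 / (k+1) := one_div_le_one_div_of_le (by linarith) hak
    have h2 := Real.le_log_one_add_of_nonneg (x := 2 / (2*k+1)) (by positivity)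
    have h3 : 2 * (2 / (2*k+1)) / (2 / (2*k+1) + 2) = 1 / (k+1) := by
      field_simp
      ring
    have h4 : (1 + 2 / (2*k+1)) = (2 * (k+1) + 1) / (2*k+1) := by
      field_simp
      ring
    rw [h3, h4, Real.log_div (by positivity) (by positivity)] at h2
    push_cast
    linarith

lemma two_pow_bound (s : ℕ) (hs : 1 ≤ s) :
    (s:ℝ) * Real.log ((2:ℝ)^s + 1) * (10/7) ≤ Real.log 3 * ((2:ℝ)^s+1) := by
  have h3 : 0 < Real.log 3 := Real.log_pos (by norm_num)
  rcases Nat.lt_or_ge s 5 with h | h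
  · interval_cases s
    · norm_num; linarith
    · have : 4 * Real.log 5 ≤ 7 * Real.log 3 := by
        have := Real.log_le_log (by norm_num) (by norm_num : (5:ℝ)^4 ≤ 3^7)
        rw [Real.log_pow, Real.log_pow] at this
        exact_mod_cast this
      norm_num; linarith
    · have : Real.log 9 = 2 * Real.log 3 := by
        rw [show (9:ℝ) = 3^2 by norm_num, Real.log_pow]; norm_num
      norm_num [this]; linarith
    · have : 5 * Real.log 17 ≤ 13 * Real.log 3 := by
        have := Real.log_le_log (by norm_num) (by norm_num : (17:ℝ)^5 ≤ 3^13)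
        rw [Real.log_pow, Real.log_pow] at this
        exact_mod_cast this
      norm_num; linarith
  · have h1 : ((2:ℝ)^s+1)^3 ≤ 9^s := by
      induction s, h using Nat.le_induction with
      | base => norm_num
      | succ k hk ih =>
        have h5 : (0:ℝ) < 2^k := by positivity
        have ih' := ih (by omega)
        calc ((2:ℝ)^(k+1)+1)^3 ≤ (2 * (2^k+1))^3 := by
              gcongr; rw [pow_succ]; linarith
          _ = 8 * (2^k+1)^3 := by ring
          _ ≤ 9 * 9^k := by nlinarith [show (0:ℝ) < (2^k+1)^3 by positivity]
          _ = 9^(k+1) := by ring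
    have h2 : ((s:ℝ))^2 ≤ 2^s := by
      have : s^2 ≤ 2^s := by
        clear h1 hs
        induction s, h using Nat.le_induction with
        | base => norm_num
        | succ k hk ih => rw [pow_succ 2 k]; nlinarith
      exact_mod_cast this
    have h4 := Real.log_le_log (by positivity) h1
    rw [Real.log_pow, Real.log_pow, show (9:ℝ) = 3^2 by norm_num, Real.log_pow] at h4
    push_cast at h4
    have hs0 : (0:ℝ) ≤ s := by positivity
    have h6 : Real.log ((2:ℝ)^s+1) ≤ (s:ℝ) * (2/3) * Real.log 3 := by linarith
    calc (s:ℝ) * Real.log ((2:ℝ)^s + 1) * (10/7) ≤ s * ((s:ℝ) * (2/3) * Real.log 3) * (10/7) := by gcongr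
      _ = (20/21) * Real.log 3 * (s:ℝ)^2 := by ring
      _ ≤ (20/21) * Real.log 3 * 2^s := by gcongr
      _ ≤ _ := by nlinarith [show (0:ℝ) < 2^s by positivity]

lemma K_bound (s K : ℕ) (hs : 1 ≤ s) (hK : 2^(s-1) ≤ K) :
    (s:ℝ) * Real.log (2 * (K:ℝ) + 1) * (10/7) ≤ Real.log 3 * (2 * (K:ℝ)+1) := by
  have h1 := two_pow_bound s hs
  have hge : (2:ℝ)^s + 1 ≤ 2 * (K:ℝ) + 1 := by
    have : 2^s ≤ 2 * K := by
      calc 2^s = 2 * 2^(s-1) := by rw [← pow_succ']; congr 1; omega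
        _ ≤ _ := by omega
    have : (2:ℝ)^s ≤ 2 * (K:ℝ) := by exact_mod_cast this
    linarith
  have he : Real.exp 1 ≤ (2:ℝ)^s + 1 := by
    have h2 : (2:ℝ)^1 ≤ 2^s := pow_le_pow_right₀ (by norm_num) hs
    have := Real.exp_one_lt_d9
    norm_num at this h2
    linarith
  have h2 := Real.log_div_self_antitoneOn (Set.mem_Ici.mpr he) (Set.mem_Ici.mpr (he.trans hge)) hge
  simp only at h2
  have hpos : (0:ℝ) < 2^s+1 := by positivity
  have hposK : (0:ℝ) < 2 * (K:ℝ) + 1 := by positivity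
  rw [div_le_div_iff₀ hposK hpos] at h2
  have hs0 : (0:ℝ) ≤ s := by positivity
  have h3 : (s:ℝ) * Real.log (2 * (K:ℝ) + 1) * (10/7) * (2^s+1) ≤ Real.log 3 * (2 * (K:ℝ)+1) * (2^s+1) := by
    calc (s:ℝ) * Real.log (2 * (K:ℝ) + 1) * (10/7) * (2^s+1) 
        = s * (10/7) * (Real.log (2 * (K:ℝ) + 1) * (2^s+1)) := by ring
      _ ≤ s * (10/7) * (Real.log ((2:ℝ)^s+1) * (2 * (K:ℝ) + 1)) := by gcongr
      _ = (s * Real.log ((2:ℝ)^s+1) * (10/7)) * (2 * (K:ℝ) + 1) := by ring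
      _ ≤ (Real.log 3 * ((2:ℝ)^s+1)) * (2 * (K:ℝ) + 1) := by gcongr
      _ = _ := by ring
  exact le_of_mul_le_mul_right h3 hpos

lemma term_bound (s K q X : ℕ) (hs : 1 ≤ s) (hK : 2^(s-1) ≤ K) (hq : 3 ≤ q) (hX : 3 ≤ X)
    (h : q ^ (2 * K) ≤ X ^ (q-1)) :
    (s:ℝ) * (Real.log (2 * (K:ℝ) + 1) / (2 * q)) ≤ 7/20 * Real.log X := by
  have h1 := K_bound s K hs hK
  have h3 : 0 < Real.log 3 := Real.log_pos (by norm_num)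
  have hq' : (3:ℝ) ≤ q := by exact_mod_cast hq
  have hX' : (3:ℝ) ≤ X := by exact_mod_cast hX
  have hlX : Real.log 3 ≤ Real.log X := Real.log_le_log (by norm_num) hX'
  have hlq : Real.log 3 ≤ Real.log q := Real.log_le_log (by norm_num) hq'
  have h2 : 2 * (K:ℝ) * Real.log q ≤ ((q:ℝ)-1) * Real.log X := by
    have h4 : (q:ℝ)^(2*K) ≤ (X:ℝ)^(q-1) := by exact_mod_cast h
    have := Real.log_le_log (by positivity) h4
    rw [Real.log_pow, Real.log_pow, Nat.cast_sub (by omega)] at this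
    push_cast at this
    exact this
  have hK0 : (0:ℝ) ≤ K := by positivity
  have key : Real.log 3 * (2 * (K:ℝ)+1) ≤ q * Real.log X := by
    rcases le_total ((q:ℝ)) (2*K+1) with hc | hc
    · have h5 : 2 * (K:ℝ) * Real.log 3 ≤ ((q:ℝ)-1) * Real.log X :=
        (mul_le_mul_of_nonneg_left hlq (by positivity)).trans h2
      have h6 : Real.log 3 * (2 * (K:ℝ)+1) * (q-1) ≤ q * Real.log X * (q-1) := by
        nlinarith
      exact le_of_mul_le_mul_right h6 (by linarith)
    · nlinarith
  rw [mul_div_assoc', div_le_iff₀ (by positivity)]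
  linarith

lemma log_sub_log_totient (M : ℕ) (hM : 0 < M) :
    Real.log M - Real.log (Nat.totient M) =
      ∑ p ∈ M.primeFactors, (Real.log p - Real.log ((p:ℝ) - 1)) := by
  have h1 := Nat.totient_eq_mul_prod_factors M
  have h2 : ((Nat.totient M : ℕ) : ℝ) = M * ∏ p ∈ M.primeFactors, (1 - (p:ℝ)⁻¹) := by
    have := congrArg (fun z : ℚ => (z:ℝ)) h1
    push_cast at this
    exact this
  have hne : ∀ p ∈ M.primeFactors, (1 - (p:ℝ)⁻¹) ≠ 0 := by
    intro p hp
    have hp2 : (2:ℝ) ≤ p := by exact_mod_cast (Nat.prime_of_mem_primeFactors hp).two_le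
    have : (p:ℝ)⁻¹ ≤ 2⁻¹ := inv_anti₀ (by norm_num) hp2
    norm_num at this
    intro h
    linarith
  rw [h2, Real.log_mul (by positivity) (Finset.prod_ne_zero_iff.mpr hne), Real.log_prod hne,
    sub_add_eq_sub_sub, sub_self, zero_sub, ← Finset.sum_neg_distrib]
  refine Finset.sum_congr rfl fun p hp => ?_
  have hp2 : (2:ℝ) ≤ p := by exact_mod_cast (Nat.prime_of_mem_primeFactors hp).two_le
  rw [← Real.log_div (by positivity) (by intro h; linarith), ← Real.log_inv]
  congr 1
  have : (p:ℝ) - 1 ≠ 0 := by intro h; linarith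
  field_simp

lemma even_bound (M X : ℕ) (hM : 0 < M) (h2 : 2 ∣ M) (hMX : M < X) :
    ∑ p ∈ M.primeFactors, (Real.log p - Real.log ((p:ℝ) - 1)) ≤ 13/20 * Real.log X := by
  have hmem : 2 ∈ M.primeFactors := Nat.mem_primeFactors.mpr ⟨Nat.prime_two, h2, hM.ne'⟩
  set S := M.primeFactors.erase 2 with hS
  have h3S : ∀ p ∈ S, (3:ℝ) ≤ p := by
    intro p hp
    rw [hS, Finset.mem_erase] at hp
    have := (Nat.prime_of_mem_primeFactors hp.2).two_le
    exact_mod_cast (by omega : 3 ≤ p)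
  have hsum : ∑ p ∈ M.primeFactors, Real.log (p:ℝ) ≤ Real.log M := by
    have hpos : ∀ p ∈ M.primeFactors, (p:ℝ) ≠ 0 := fun p hp => by
      exact_mod_cast (Nat.prime_of_mem_primeFactors hp).ne_zero
    rw [← Real.log_prod hpos]
    apply Real.log_le_log
    · exact Finset.prod_pos fun p hp => by exact_mod_cast (Nat.prime_of_mem_primeFactors hp).pos
    · have := Nat.le_of_dvd hM (Nat.prod_primeFactors_dvd M)
      rw [← Nat.cast_prod]
      exact_mod_cast this
  have hl2 : 0 < Real.log 2 := Real.log_pos (by norm_num)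
  have hl3 : 0 < Real.log 3 := Real.log_pos (by norm_num)
  have hMX' : Real.log M ≤ Real.log X := Real.log_le_log (by exact_mod_cast hM) (by exact_mod_cast hMX.le)
  have hX3 : Real.log 3 ≤ Real.log X := by
    have := Nat.le_of_dvd hM h2
    exact Real.log_le_log (by norm_num) (by exact_mod_cast (by omega : 3 ≤ X))
  rw [← Finset.add_sum_erase _ _ hmem, ← hS] at hsum ⊢
  have hA : (S.card:ℝ) * Real.log 3 ≤ ∑ p ∈ S, Real.log (p:ℝ) := by
    rw [← nsmul_eq_mul]
    exact Finset.card_nsmul_le_sum _ _ _ fun p hp => Real.log_le_log (by norm_num) (h3S p hp)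
  have hB : ∑ p ∈ S, (Real.log (p:ℝ) - Real.log ((p:ℝ)-1)) ≤ (S.card:ℝ) * (Real.log 3 - Real.log 2) := by
    rw [← nsmul_eq_mul]
    refine Finset.sum_le_card_nsmul _ _ _ fun p hp => ?_
    have := h3S p hp
    rw [← Real.log_div (by positivity) (by intro h; linarith), ← Real.log_div (by norm_num) (by norm_num)]
    apply Real.log_le_log
    · apply div_pos <;> linarith
    · rw [div_le_div_iff₀ (by linarith) (by norm_num)]; linarith
  have e1 : 20 * Real.log 2 ≤ 13 * Real.log 3 := by
    have := Real.log_le_log (by norm_num) (by norm_num : (2:ℝ)^20 ≤ 3^13)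
    rw [Real.log_pow, Real.log_pow] at this
    exact_mod_cast this
  have e2 : 7 * (Real.log 2 + Real.log 3) ≤ 20 * Real.log 2 := by
    have := Real.log_le_log (by norm_num) (by norm_num : (2*3:ℝ)^7 ≤ 2^20)
    rw [Real.log_pow, Real.log_pow, Real.log_mul (by norm_num) (by norm_num)] at this
    exact_mod_cast this
  have e0 : Real.log ((2:ℕ):ℝ) - Real.log (((2:ℕ):ℝ) - 1) = Real.log 2 := by norm_num
  rw [e0]
  have e0' : Real.log ((2:ℕ):ℝ) = Real.log 2 := by norm_num
  rw [e0'] at hsum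
  rcases Nat.eq_zero_or_pos S.card with hc | hc
  · rw [hc] at hB
    rw [Nat.cast_zero, zero_mul] at hB
    linarith
  · have hc' : (1:ℝ) ≤ S.card := by exact_mod_cast hc
    nlinarith
lemma three_le (x y m : ℕ) (hy : 0 < y) (hxy : y < x) (hm : 2 ≤ m) : 3 ≤ x ^ m - y ^ m := by
  obtain ⟨k, rfl⟩ : ∃ k, m = k + 1 := ⟨m - 1, by omega⟩
  have h1 : y ^ k < x ^ k := Nat.pow_lt_pow_left hxy (by omega)
  have h2 : x ≤ x ^ k := Nat.le_self_pow (by omega) x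
  have h3 : y ^ (k+1) + 3 ≤ x ^ (k+1) := by
    rw [pow_succ, pow_succ]
    nlinarith
  omega

lemma prod_pred_dvd_totient (N : ℕ) : ∏ p ∈ N.primeFactors, (p - 1) ∣ Nat.totient N := by
  rw [Nat.totient_eq_div_primeFactors_mul]
  exact Dvd.intro_left _ rfl

lemma prime_not_dvd (x y m p : ℕ) (hxy : y < x) (hc : x.Coprime y) (hp : p.Prime)
    (hpN : p ∣ x ^ m - y ^ m) (hm : 0 < m) : ¬ p ∣ y := by
  intro h
  have h1 : y ^ m ≤ x ^ m := Nat.pow_le_pow_left hxy.le m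
  have h2 : p ∣ x ^ m := (Nat.dvd_sub_iff_left h1 (dvd_pow h hm.ne')).mp hpN
  exact Nat.not_coprime_of_dvd_of_dvd hp.one_lt (hp.dvd_of_dvd_pow h2) h hc

lemma prime_not_dvd' (x y m p : ℕ) (hxy : y < x) (hc : x.Coprime y) (hp : p.Prime)
    (hpN : p ∣ x ^ m - y ^ m) (hm : 0 < m) : ¬ p ∣ x := by
  intro h
  have h1 : y ^ m ≤ x ^ m := Nat.pow_le_pow_left hxy.le m
  have h2 : p ∣ y ^ m := (Nat.dvd_sub_iff_right h1 (dvd_pow h hm.ne')).mp hpN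
  exact Nat.not_coprime_of_dvd_of_dvd hp.one_lt h (hp.dvd_of_dvd_pow h2) hc

lemma unit_ne_zero {x y p : ℕ} (hp : p.Prime) (hx : ¬ p ∣ x) (hy : ¬ p ∣ y) :
    (x : ZMod p) * (y : ZMod p)⁻¹ ≠ 0 := by
  have := Fact.mk hp
  have hy0 : (y : ZMod p) ≠ 0 := by rwa [Ne, ZMod.natCast_eq_zero_iff]
  have hx0 : (x : ZMod p) ≠ 0 := by rwa [Ne, ZMod.natCast_eq_zero_iff]
  exact mul_ne_zero hx0 (inv_ne_zero hy0)

/-- A primitive prime divisor, as a prime factor of the big number. -/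
lemma primitive_prime (x y m d : ℕ) (hy : 0 < y) (hxy : y + 2 ≤ x) (hc : x.Coprime y)
    (hm : 0 < m) (hd : Odd d) (hd3 : 3 ≤ d) (hdm : d ∣ m) :
    ∃ p ∈ (x ^ m - y ^ m).primeFactors, d ∣ p - 1 ∧
      orderOf ((x : ZMod p) * (y : ZMod p)⁻¹) = d := by
  obtain ⟨p, hp, hpy, hord⟩ := zsigmondy_odd x y d hy hxy hc hd hd3
  have := Fact.mk hp
  have hlt : y ^ m < x ^ m := Nat.pow_lt_pow_left (by omega) hm.ne'
  have hpN : p ∣ x ^ m - y ^ m := by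
    rw [dvd_pow_sub_pow_iff hp hpy (by omega), ← orderOf_dvd_iff_pow_eq_one, hord]; exact hdm
  refine ⟨p, Nat.mem_primeFactors.mpr ⟨hp, hpN, by omega⟩, ?_, hord⟩
  rw [← hord]
  exact ZMod.orderOf_dvd_card_sub_one
    (unit_ne_zero hp (prime_not_dvd' x y m p (by omega) hc hp hpN hm) hpy)

/-- The prime two is never good. -/
lemma two_bad (x y m n : ℕ) (hxy : y < x) (hxo : Odd x) (hyo : Odd y) (hn : 0 < n) (hm : 0 < m)
    (hdvd : Nat.totient (x ^ m - y ^ m) ∣ x ^ n - y ^ n)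
    (hbig : 2 * Nat.totient (x ^ m - y ^ m) < x ^ m - y ^ m) :
    padicValNat 2 m ≤ padicValNat 2 n := by
  by_contra hlt
  push Not at hlt
  have hNlt : y ^ m < x ^ m := Nat.pow_lt_pow_left (by omega) hm.ne'
  set N := x ^ m - y ^ m with hN
  have hN0 : N ≠ 0 := by omega
  obtain ⟨b, n', hn', hnb⟩ := Nat.exists_eq_pow_mul_and_not_dvd (n := n) (by omega) 2 (by norm_num)
  have hb : padicValNat 2 n = b := by
    rw [hnb, padicValNat_base_pow_mul (by norm_num) (by rintro rfl; simp at hn'),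
      padicValNat.eq_zero_of_not_dvd hn']; simp
  obtain ⟨e, r, hr, hNe⟩ := Nat.exists_eq_pow_mul_and_not_dvd (n := N) hN0 2 (by norm_num)
  rw [hb] at hlt
  have hdm : 2 ^ b * 2 ∣ m := by
    rw [← pow_succ]
    exact (pow_dvd_pow _ hlt).trans pow_padicValNat_dvd
  set A := x ^ (2^b) with hA
  set B := y ^ (2^b) with hB
  have hAo : Odd A := hxo.pow
  have hBo : Odd B := hyo.pow
  have hBA : B < A := Nat.pow_lt_pow_left hxy (by positivity)
  have hABN : (A - B) * 2 ∣ N := by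
    have h1 : A ^ 2 - B ^ 2 ∣ N := by
      obtain ⟨t, ht⟩ := hdm
      rw [hN, ht, pow_mul, pow_mul y, hA, hB, ← pow_mul, ← pow_mul]
      exact Nat.sub_dvd_pow_sub_pow _ _ _
    refine dvd_trans ?_ h1
    rw [Nat.sq_sub_sq, mul_comm (A+B)]
    exact mul_dvd_mul_left _ (hAo.add_odd hBo).two_dvd
  have h2N : 2 ∣ N := (Dvd.intro_left _ rfl).trans hABN
  have he : 0 < e := by
    rcases Nat.eq_zero_or_pos e with h | h
    · rw [h, pow_zero, one_mul] at hNe; rw [hNe] at h2N; exact absurd h2N hr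
    · exact h
  have hcop : Nat.Coprime (2^e) r := ((Nat.Prime.coprime_iff_not_dvd Nat.prime_two).mpr hr).pow_left e
  have htot : Nat.totient N = 2^(e-1) * Nat.totient r := by
    rw [hNe, Nat.totient_mul hcop, Nat.totient_prime_pow Nat.prime_two he]; simp
  have h2e : 2^e = 2^(e-1) * 2 := by rw [← pow_succ]; congr 1; omega
  have hr3 : 2 < r := by
    by_contra h
    have hr1 : r = 1 := by
      interval_cases r
      · simp at hr
      · rfl
      · simp at hr
    rw [hr1] at htot hNe
    simp at htot hNe
    rw [htot, hNe, h2e] at hbig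
    omega
  have h2phi : 2 ^ e ∣ Nat.totient N := by
    rw [htot, h2e]
    exact mul_dvd_mul_left _ (Nat.totient_even hr3).two_dvd
  have h3 : 2 ^ e ∣ A ^ n' - B ^ n' := by
    have := h2phi.trans hdvd
    rwa [hnb, pow_mul, pow_mul y] at this
  have h4 : 2 ^ e ∣ A - B := by
    have hle : B ^ n' ≤ A ^ n' := Nat.pow_le_pow_left hBA.le _
    have h5 : ((2:ℤ)^e) ∣ (A:ℤ)^n' - (B:ℤ)^n' := by
      have : ((2^e : ℕ):ℤ) ∣ ((A ^ n' - B ^ n' : ℕ):ℤ) := by exact_mod_cast h3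
      rw [Nat.cast_sub hle] at this
      exact_mod_cast this
    rw [← geom_sum₂_mul] at h5
    have h6 : ¬ (2:ℤ) ∣ ∑ i ∈ Finset.range n', (A:ℤ) ^ i * (B:ℤ) ^ (n' - 1 - i) := by
      apply not_dvd_geom_sum₂ Int.prime_two
      · have := (Nat.Odd.sub_odd hAo hBo).two_dvd
        have h7 : ((2:ℕ):ℤ) ∣ ((A - B : ℕ):ℤ) := by exact_mod_cast this
        rwa [Nat.cast_sub hBA.le] at h7
      · have := hAo.not_two_dvd_nat
        exact_mod_cast this
      · exact_mod_cast hn'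
    have h8 : IsCoprime ((2:ℤ)^e) (∑ i ∈ Finset.range n', (A:ℤ) ^ i * (B:ℤ) ^ (n' - 1 - i)) :=
      IsCoprime.pow_left ((Prime.coprime_iff_not_dvd Int.prime_two).mpr h6)
    have h9 := h8.dvd_of_dvd_mul_left h5
    have h10 : ((2^e:ℕ):ℤ) ∣ ((A - B : ℕ):ℤ) := by
      rw [Nat.cast_sub hBA.le]; exact_mod_cast h9
    exact_mod_cast h10
  have h11 : 2 ^ e * 2 ∣ 2 ^ e * r := by
    rw [← hNe]; exact (mul_dvd_mul_right h4 2).trans hABN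
  exact hr (Nat.dvd_of_mul_dvd_mul_left (by positivity) h11)

/-- Size of the `q`-part of `x^(q-1) - y^(q-1)`. -/
lemma wieferich_bound (x y q : ℕ) (hxy : y < x) (hxo : Odd x) (hyo : Odd y) (hq : q.Prime)
    (hqo : Odd q) (hqx : ¬ q ∣ x) :
    q ^ (2 * padicValNat q (x ^ (q-1) - y ^ (q-1))) ≤ x ^ (q-1) := by
  obtain ⟨h, hh⟩ := hqo
  have h1 : q - 1 = h * 2 := by omega
  have hh0 : h ≠ 0 := by rintro rfl; exact hq.ne_one (by omega)
  have := Fact.mk hq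
  set V := padicValNat q (x ^ (q-1) - y ^ (q-1)) with hV
  have hdv : q ^ V ∣ x ^ (q-1) - y ^ (q-1) := pow_padicValNat_dvd
  set A := x ^ h with hA
  set B := y ^ h with hB
  have hBA : B < A := Nat.pow_lt_pow_left hxy hh0
  rw [h1, pow_mul, pow_mul y, Nat.sq_sub_sq] at hdv
  have hnot : ¬ (q ∣ A + B ∧ q ∣ A - B) := by
    rintro ⟨ha, hb⟩
    have h2 : q ∣ 2 * A := by
      have := dvd_add ha hb
      rwa [show A + B + (A - B) = 2 * A by omega] at this
    rcases hq.dvd_mul.mp h2 with h3 | h3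
    · have := Nat.le_of_dvd (by norm_num) h3
      have := hq.two_le
      omega
    · exact hqx (hq.dvd_of_dvd_pow h3)
  have hlt : q ^ V ≤ A := by
    by_cases hc : q ∣ A + B
    · have hc2 : ¬ q ∣ A - B := fun h => hnot ⟨hc, h⟩
      have hcop : Nat.Coprime (q^V) (A - B) := ((Nat.Prime.coprime_iff_not_dvd hq).mpr hc2).pow_left V
      have h2 := hcop.dvd_of_dvd_mul_right hdv
      have heven : 2 ∣ A + B := ((hxo.pow).add_odd hyo.pow).two_dvd
      have hcop2 : Nat.Coprime (q^V) 2 := by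
        apply Nat.Coprime.pow_left
        rw [Nat.coprime_primes hq Nat.prime_two]; omega
      have := Nat.le_of_dvd (by omega) (hcop2.mul_dvd_of_dvd_of_dvd h2 heven)
      omega
    · have hcop : Nat.Coprime (q^V) (A + B) := ((Nat.Prime.coprime_iff_not_dvd hq).mpr hc).pow_left V
      have h2 := hcop.dvd_of_dvd_mul_left hdv
      have := Nat.le_of_dvd (by omega) h2
      omega
  calc q ^ (2 * V) = (q ^ V) ^ 2 := by rw [← pow_mul, mul_comm]
    _ ≤ A ^ 2 := Nat.pow_le_pow_left hlt 2
    _ = x ^ (q-1) := by rw [h1, pow_mul]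
lemma sum_biUnion_le_aux (G : Finset ℕ) (S : ℕ → Finset ℕ) (f : ℕ → ℝ)
    (hf : ∀ q ∈ G, ∀ p ∈ S q, 0 ≤ f p) :
    ∑ p ∈ G.biUnion S, f p ≤ ∑ q ∈ G, ∑ p ∈ S q, f p := by
  induction G using Finset.induction_on with
  | empty => simp
  | insert a G ha ih =>
    rw [Finset.biUnion_insert, Finset.sum_insert ha]
    have h1 := ih (fun q hq => hf q (Finset.mem_insert_of_mem hq))
    have h2 := Finset.sum_union_inter (s₁ := S a) (s₂ := G.biUnion S) (f := f)
    have h3 : 0 ≤ ∑ p ∈ S a ∩ G.biUnion S, f p :=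
      Finset.sum_nonneg fun p hp =>
        hf a (Finset.mem_insert_self a G) p (Finset.mem_inter.mp hp).1
    linarith

lemma card_lower (x y m : ℕ) (hy : 0 < y) (hxy : y + 2 ≤ x) (hc : x.Coprime y)
    (hm : 0 < m) (G : Finset ℕ) (hG : ∀ q ∈ G, q.Prime ∧ Odd q ∧ q ∣ m) (q : ℕ) (hq : q ∈ G) :
    2 ^ (G.card - 1) ≤ ((x ^ m - y ^ m).primeFactors.filter (fun p => q ∣ p - 1)).card := by
  have key : ∀ T : Finset ℕ, T ⊆ G.erase q → ∃ p ∈ (x ^ m - y ^ m).primeFactors,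
      (∏ r ∈ insert q T, r) ∣ p - 1 ∧
      orderOf ((x : ZMod p) * (y : ZMod p)⁻¹) = ∏ r ∈ insert q T, r := by
    intro T hT
    have hU : insert q T ⊆ G := by
      intro r hr
      rcases Finset.mem_insert.mp hr with h | h
      · rw [h]; exact hq
      · exact Finset.mem_of_mem_erase (hT h)
    have hodd : Odd (∏ r ∈ insert q T, r) := by
      refine Finset.prod_induction (fun r => r) Odd (fun a b ha hb => ha.mul hb) odd_one ?_
      intro r hr
      exact (hG r (hU hr)).2.1
    have hdm : (∏ r ∈ insert q T, r) ∣ m := by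
      refine dvd_trans ?_ (Nat.prod_primeFactors_dvd m)
      apply Finset.prod_dvd_prod_of_subset
      intro r hr
      have := hG r (hU hr)
      exact Nat.mem_primeFactors.mpr ⟨this.1, this.2.2, hm.ne'⟩
    have hqd : q ∣ ∏ r ∈ insert q T, r := Finset.dvd_prod_of_mem _ (Finset.mem_insert_self q T)
    have hq3 : 3 ≤ q := by
      obtain ⟨h1, ⟨k, h2⟩, -⟩ := hG q hq
      have := h1.two_le
      omega
    exact primitive_prime x y m _ hy hxy hc hm hodd
      (hq3.trans (Nat.le_of_dvd hodd.pos hqd)) hdm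
  choose! f hf1 hf2 hf3 using key
  have hcard : (G.erase q).powerset.card = 2 ^ (G.card - 1) := by
    rw [Finset.card_powerset, Finset.card_erase_of_mem hq]
  rw [← hcard]
  apply Finset.card_le_card_of_injOn f
  · intro T hT
    have hT' := Finset.mem_powerset.mp hT
    simp only [Finset.coe_filter, Set.mem_ofPred_eq]
    exact ⟨hf1 T hT', (Finset.dvd_prod_of_mem (fun r => r) (Finset.mem_insert_self q T)).trans (hf2 T hT')⟩
  · intro T hT T' hT' heq
    have hT := Finset.mem_powerset.mp hT
    have hT' := Finset.mem_powerset.mp hT'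
    have h1 := hf3 T hT
    have h2 := hf3 T' hT'
    rw [heq, h2] at h1
    have hpr : ∀ T : Finset ℕ, T ⊆ G.erase q → ∀ r ∈ insert q T, r.Prime := by
      intro T hT r hr
      rcases Finset.mem_insert.mp hr with h | h
      · rw [h]; exact (hG q hq).1
      · exact (hG r (Finset.mem_of_mem_erase (hT h))).1
    have h3 := congrArg Nat.primeFactors h1
    rw [Nat.primeFactors_prod (hpr T hT), Nat.primeFactors_prod (hpr T' hT')] at h3
    have h4 := congrArg (fun S => Finset.erase S q) h3
    beta_reduce at h4
    rw [Finset.erase_insert (fun h => Finset.notMem_erase q G (hT' h)),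
      Finset.erase_insert (fun h => Finset.notMem_erase q G (hT h))] at h4
    exact h4.symm

lemma card_upper (x y m n : ℕ) (hy : 0 < y) (hxy : y + 2 ≤ x) (hc : x.Coprime y)
    (hm : 0 < m) (hn : 0 < n)
    (hdvd : Nat.totient (x ^ m - y ^ m) ∣ x ^ n - y ^ n) (q : ℕ) (hq : q.Prime) (hqo : Odd q)
    (hqx : ¬ q ∣ x) (hqy : ¬ q ∣ y)
    (hlt : padicValNat q n < padicValNat q m) :
    ((x ^ m - y ^ m).primeFactors.filter (fun p => q ∣ p - 1)).card
      ≤ padicValNat q (x ^ (q-1) - y ^ (q-1)) := by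
  have := Fact.mk hq
  have hq3 : 3 ≤ q := by
    obtain ⟨k, h2⟩ := hqo
    have := hq.two_le
    omega
  set a := padicValNat q m with ha
  have ha1 : 1 ≤ a := by omega
  obtain ⟨p0, hp0, hd0, -⟩ := primitive_prime x y m (q^a) hy hxy hc hm hqo.pow
    (hq3.trans (Nat.le_self_pow (by omega) q)) pow_padicValNat_dvd
  set S := (x ^ m - y ^ m).primeFactors.filter (fun p => q ∣ p - 1) with hS
  have hp0S : p0 ∈ S := by
    rw [hS, Finset.mem_filter]
    exact ⟨hp0, (dvd_pow_self q (by omega)).trans hd0⟩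
  have h1 : q ^ (a + (S.card - 1)) ∣ x ^ n - y ^ n := by
    refine dvd_trans ?_ ((prod_pred_dvd_totient _).trans hdvd)
    refine dvd_trans ?_ (Finset.prod_dvd_prod_of_subset S _ _ (Finset.filter_subset _ _))
    rw [← Finset.mul_prod_erase S _ hp0S, pow_add]
    refine mul_dvd_mul hd0 ?_
    rw [← Finset.card_erase_of_mem hp0S, ← Finset.prod_const]
    apply Finset.prod_dvd_prod_of_dvd
    intro p hp
    exact (Finset.mem_filter.mp (Finset.mem_of_mem_erase hp)).2
  have h2 : q ^ (a + (S.card - 1)) ∣ (x ^ (q-1)) ^ n - (y ^ (q-1)) ^ n := by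
    refine h1.trans ?_
    rw [← pow_mul, ← pow_mul, mul_comm, pow_mul, pow_mul]
    exact Nat.sub_dvd_pow_sub_pow _ _ _
  have hlt1 : y ^ (q-1) < x ^ (q-1) := Nat.pow_lt_pow_left (by omega) (by omega)
  have h3 : q ∣ x ^ (q-1) - y ^ (q-1) := by
    rw [dvd_pow_sub_pow_iff hq hqy (by omega)]
    exact ZMod.pow_card_sub_one_eq_one (unit_ne_zero hq hqx hqy)
  have h4 := padicValNat.pow_sub_pow (p := q) hqo hlt1 h3 (fun h => hqx (hq.dvd_of_dvd_pow h)) hn.ne'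
  have hlt2 := Nat.pow_lt_pow_left hlt1 hn.ne'
  rw [padicValNat_dvd_iff_le (by omega), h4] at h2
  omega

lemma sum_S_bound (P : Finset ℕ) (q : ℕ) (hq : 3 ≤ q) (hqo : Odd q) 
    (hP : ∀ p ∈ P, p.Prime ∧ q ∣ p - 1) :
    ∑ p ∈ P, (Real.log p - Real.log ((p:ℝ) - 1)) ≤ Real.log (2 * (P.card:ℝ) + 1) / (2 * q) := by
  have hq0 : (0:ℝ) < q := by positivity
  have hfac : ∀ p ∈ P, 0 < (p-1)/(2*q) ∧ p - 1 = 2 * q * ((p-1)/(2*q)) := by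
    intro p hp
    obtain ⟨hpp, hqp⟩ := hP p hp
    have h2 := hpp.two_le
    have hle := Nat.le_of_dvd (by omega) hqp
    have hpo : Odd p := hpp.odd_of_ne_two (by omega)
    have h2p : 2 ∣ p - 1 := (Nat.Odd.sub_odd hpo odd_one).two_dvd
    have hcop : Nat.Coprime 2 q := Nat.coprime_two_left.mpr hqo
    have hd := hcop.mul_dvd_of_dvd_of_dvd h2p hqp
    refine ⟨Nat.div_pos (Nat.le_of_dvd (by omega) hd) (by omega), (Nat.mul_div_cancel' hd).symm⟩
  have hinj : Set.InjOn (fun p => (p-1)/(2*q)) (P : Set ℕ) := by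
    intro p hp p' hp' h
    have h1 := hfac p hp
    have h2 := hfac p' hp'
    simp only at h
    rw [← h] at h2
    have h3 := (hP p hp).1.two_le
    have h4 := (hP p' hp').1.two_le
    have := h1.2.trans h2.2.symm
    omega
  have hJ := sum_inv_le_log (P.image (fun p => (p-1)/(2*q))) (by
    intro j hj
    obtain ⟨p, hp, rfl⟩ := Finset.mem_image.mp hj
    exact (hfac p hp).1)
  rw [Finset.sum_image hinj, Finset.card_image_of_injOn hinj] at hJ
  calc ∑ p ∈ P, (Real.log p - Real.log ((p:ℝ) - 1)) 
      ≤ ∑ p ∈ P, (1 / (((p-1)/(2*q) : ℕ):ℝ)) / (2 * q) := by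
        apply Finset.sum_le_sum
        intro p hp
        obtain ⟨h0, h1⟩ := hfac p hp
        have h3 := (hP p hp).1.two_le
        have h3' : (2:ℝ) ≤ p := by exact_mod_cast h3
        have h4 : (p:ℝ) - 1 = 2 * q * (((p-1)/(2*q) : ℕ):ℝ) := by
          have : ((p - 1 : ℕ):ℝ) = 2 * q * (((p-1)/(2*q) : ℕ):ℝ) := by exact_mod_cast h1
          rwa [Nat.cast_sub (by omega), Nat.cast_one] at this
        have h5 : (1 / (((p-1)/(2*q) : ℕ):ℝ)) / (2 * q) = 1 / ((p:ℝ)-1) := by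
          rw [h4, div_div, mul_comm]
        rw [h5, ← Real.log_div (by positivity) (by intro h; linarith)]
        have h6 := Real.log_le_sub_one_of_pos (x := (p:ℝ)/((p:ℝ)-1)) (div_pos (by linarith) (by linarith))
        have h7 : (p:ℝ)/((p:ℝ)-1) - 1 = 1 / ((p:ℝ)-1) := by
          have : (p:ℝ) - 1 ≠ 0 := by intro h; linarith
          field_simp
          ring
        linarith
    _ = (∑ p ∈ P, (1 / (((p-1)/(2*q) : ℕ):ℝ))) / (2 * q) := by rw [Finset.sum_div]
    _ ≤ _ := by gcongr

theorem core (x y m n : ℕ) (hy : 0 < y) (hn : 0 < n) (hxy : y < x) (hnm : n < m)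
    (hc : x.Coprime y) (hdvd : Nat.totient (x ^ m - y ^ m) ∣ x ^ n - y ^ n) : False := by
  have hm : 0 < m := by omega
  have hN3 := three_le x y m hy hxy (by omega)
  have hltn : y ^ n < x ^ n := Nat.pow_lt_pow_left hxy hn.ne'
  have hltm : y ^ m < x ^ m := Nat.pow_lt_pow_left hxy hm.ne'
  have h2n : 2 ∣ x ^ n - y ^ n := (Nat.totient_even (by omega)).two_dvd.trans hdvd
  have hyo : Odd y := by
    have := prime_not_dvd x y n 2 hxy hc Nat.prime_two h2n hn
    rwa [← even_iff_two_dvd, Nat.not_even_iff_odd] at this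
  have hxo : Odd x := by
    have := prime_not_dvd' x y n 2 hxy hc Nat.prime_two h2n hn
    rwa [← even_iff_two_dvd, Nat.not_even_iff_odd] at this
  have hxy2 : y + 2 ≤ x := by
    obtain ⟨i, hi⟩ := hxo
    obtain ⟨j, hj⟩ := hyo
    omega
  set c := m - n with hcdef
  have hc0 : 0 < c := by omega
  have hltc : y ^ c < x ^ c := Nat.pow_lt_pow_left hxy hc0.ne'
  have hmc : m = c + n := by omega
  have hX3 : 3 ≤ x ^ c := le_trans (by omega) (Nat.le_self_pow hc0.ne' x)
  have hsize : x ^ c * Nat.totient (x ^ m - y ^ m) < x ^ m - y ^ m := by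
    calc x ^ c * Nat.totient (x ^ m - y ^ m) ≤ x ^ c * (x ^ n - y ^ n) := by
          gcongr; exact Nat.le_of_dvd (by omega) hdvd
      _ = x ^ m - x ^ c * y ^ n := by rw [Nat.mul_sub, ← pow_add, ← hmc]
      _ < x ^ m - y ^ m := by
          have h1 : y ^ m < x ^ c * y ^ n := by
            rw [hmc, pow_add]; exact Nat.mul_lt_mul_of_pos_right hltc (by positivity)
          omega
  set N := x ^ m - y ^ m with hN
  have hphipos : 0 < Nat.totient N := Nat.totient_pos.mpr (by omega)
  have h2bad : padicValNat 2 m ≤ padicValNat 2 n :=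
    two_bad x y m n hxy hxo hyo hn hm hdvd (by rw [← hN]; nlinarith)
  set G := m.primeFactors.filter (fun q => padicValNat q n < padicValNat q m) with hG
  have hGprop : ∀ q ∈ G, q.Prime ∧ Odd q ∧ q ∣ m ∧ padicValNat q n < padicValNat q m := by
    intro q hq
    rw [hG, Finset.mem_filter] at hq
    have hqp := Nat.prime_of_mem_primeFactors hq.1
    refine ⟨hqp, hqp.odd_of_ne_two ?_, Nat.dvd_of_mem_primeFactors hq.1, hq.2⟩
    rintro rfl
    omega
  set S : ℕ → Finset ℕ := fun q => N.primeFactors.filter (fun p => q ∣ p - 1) with hS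
  have hterm : ∀ q ∈ G, (G.card : ℝ) * (∑ p ∈ S q, (Real.log p - Real.log ((p:ℝ) - 1)))
      ≤ 7/20 * Real.log ((x ^ c : ℕ) : ℝ) := by
    intro q hq
    obtain ⟨hqp, hqo, hqm, hlt⟩ := hGprop q hq
    have hq3 : 3 ≤ q := by
      obtain ⟨k, h2⟩ := hqo
      have := hqp.two_le
      omega
    have hlow := card_lower x y m hy hxy2 hc hm G
      (fun r hr => ⟨(hGprop r hr).1, (hGprop r hr).2.1, (hGprop r hr).2.2.1⟩) q hq
    have hqn : q ∣ x ^ n - y ^ n := by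
      have h1 : 0 < (S q).card := lt_of_lt_of_le (by positivity) hlow
      obtain ⟨p, hp⟩ := Finset.card_pos.mp h1
      have hp' := Finset.mem_filter.mp hp
      exact hp'.2.trans ((Finset.dvd_prod_of_mem (fun p => p - 1) hp'.1).trans
        ((prod_pred_dvd_totient N).trans hdvd))
    have hqx := prime_not_dvd' x y n q hxy hc hqp hqn hn
    have hqy := prime_not_dvd x y n q hxy hc hqp hqn hn
    have hup := card_upper x y m n hy hxy2 hc hm hn hdvd q hqp hqo hqx hqy hlt
    have hw := wieferich_bound x y q hxy hxo hyo hqp hqo hqx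
    have hpow : q ^ (2 * (S q).card) ≤ (x ^ c) ^ (q-1) := by
      calc q ^ (2 * (S q).card) ≤ q ^ (2 * padicValNat q (x ^ (q-1) - y ^ (q-1))) :=
            Nat.pow_le_pow_right hqp.pos (Nat.mul_le_mul_left 2 hup)
        _ ≤ x ^ (q-1) := hw
        _ ≤ (x ^ c) ^ (q-1) := Nat.pow_le_pow_left (Nat.le_self_pow hc0.ne' x) _
    have h1 := term_bound G.card (S q).card q (x ^ c) (Finset.card_pos.mpr ⟨q, hq⟩) hlow hq3 hX3 hpow
    refine le_trans ?_ h1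
    refine mul_le_mul_of_nonneg_left ?_ (Nat.cast_nonneg _)
    apply sum_S_bound _ _ hq3 hqo
    intro p hp
    have hp' := Finset.mem_filter.mp hp
    exact ⟨Nat.prime_of_mem_primeFactors hp'.1, hp'.2⟩
  have hnonneg : ∀ p : ℕ, p.Prime → 0 ≤ Real.log p - Real.log ((p:ℝ) - 1) := by
    intro p hp
    have : (2:ℝ) ≤ p := by exact_mod_cast hp.two_le
    have := Real.log_le_log (by linarith : (0:ℝ) < (p:ℝ) - 1) (by linarith : (p:ℝ) - 1 ≤ p)
    linarith
  have hcover : N.primeFactors ⊆ (x ^ c - y ^ c).primeFactors ∪ G.biUnion S := by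
    intro p hp
    rw [Finset.mem_union]
    by_cases hex : ∃ q ∈ G, q ∣ p - 1
    · obtain ⟨q, hq, hqp⟩ := hex
      right
      exact Finset.mem_biUnion.mpr ⟨q, hq, Finset.mem_filter.mpr ⟨hp, hqp⟩⟩
    · left
      push Not at hex
      have hpp := Nat.prime_of_mem_primeFactors hp
      have := Fact.mk hpp
      have hpN := Nat.dvd_of_mem_primeFactors hp
      have hpy := prime_not_dvd x y m p hxy hc hpp hpN hm
      have hpx := prime_not_dvd' x y m p hxy hc hpp hpN hm
      refine Nat.mem_primeFactors.mpr ⟨hpp, ?_, by omega⟩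
      rw [dvd_pow_sub_pow_iff hpp hpy hxy.le, ← orderOf_dvd_iff_pow_eq_one]
      have hlm : orderOf ((x : ZMod p) * (y : ZMod p)⁻¹) ∣ m := by
        rw [orderOf_dvd_iff_pow_eq_one, ← dvd_pow_sub_pow_iff hpp hpy hxy.le]; exact hpN
      have hlp : orderOf ((x : ZMod p) * (y : ZMod p)⁻¹) ∣ p - 1 :=
        ZMod.orderOf_dvd_card_sub_one (unit_ne_zero hpp hpx hpy)
      have hln : orderOf ((x : ZMod p) * (y : ZMod p)⁻¹) ∣ n := by
        rw [Nat.dvd_iff_prime_pow_dvd_dvd]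
        intro r k hr hrk
        rcases Nat.eq_zero_or_pos k with hk | hk
        · simp [hk]
        have := Fact.mk hr
        have hrl : r ∣ orderOf ((x : ZMod p) * (y : ZMod p)⁻¹) := (dvd_pow_self r hk.ne').trans hrk
        have hrG : r ∉ G := fun h => hex r h (hrl.trans hlp)
        have hrm : r ∈ m.primeFactors := Nat.mem_primeFactors.mpr ⟨hr, hrl.trans hlm, hm.ne'⟩
        have hv : padicValNat r m ≤ padicValNat r n := by
          by_contra hlt
          exact hrG (Finset.mem_filter.mpr ⟨hrm, by omega⟩)
        have h1 := hrk.trans hlm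
        rw [padicValNat_dvd_iff_le hm.ne'] at h1
        rw [padicValNat_dvd_iff_le hn.ne']
        omega
      exact Nat.dvd_sub hlm hln
  have hM := even_bound (x ^ c - y ^ c) (x ^ c) (by omega)
    (Nat.Odd.sub_odd hxo.pow hyo.pow).two_dvd (by have : 0 < y ^ c := by positivity
                                                  omega)
  have hsum1 : ∑ p ∈ N.primeFactors, (Real.log p - Real.log ((p:ℝ) - 1)) ≤
      ∑ p ∈ (x ^ c - y ^ c).primeFactors, (Real.log p - Real.log ((p:ℝ) - 1)) +
      ∑ q ∈ G, ∑ p ∈ S q, (Real.log p - Real.log ((p:ℝ) - 1)) := by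
    have hpr : ∀ p ∈ (x ^ c - y ^ c).primeFactors ∪ G.biUnion S, p.Prime := by
      intro p hp
      rcases Finset.mem_union.mp hp with h | h
      · exact Nat.prime_of_mem_primeFactors h
      · obtain ⟨q, hq, hpq⟩ := Finset.mem_biUnion.mp h
        exact Nat.prime_of_mem_primeFactors (Finset.mem_filter.mp hpq).1
    have h1 := Finset.sum_le_sum_of_subset_of_nonneg hcover
      (f := fun p : ℕ => (Real.log p - Real.log ((p:ℝ) - 1))) (fun p hp _ => hnonneg p (hpr p hp))
    have h2 := Finset.sum_union_inter (s₁ := (x ^ c - y ^ c).primeFactors) (s₂ := G.biUnion S)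
      (f := fun p : ℕ => (Real.log p - Real.log ((p:ℝ) - 1)))
    have h3 : 0 ≤ ∑ p ∈ (x ^ c - y ^ c).primeFactors ∩ G.biUnion S,
        (Real.log p - Real.log ((p:ℝ) - 1)) :=
      Finset.sum_nonneg fun p hp => hnonneg p (Nat.prime_of_mem_primeFactors (Finset.mem_inter.mp hp).1)
    have h4 : ∑ p ∈ G.biUnion S, (Real.log p - Real.log ((p:ℝ) - 1)) ≤
        ∑ q ∈ G, ∑ p ∈ S q, (Real.log p - Real.log ((p:ℝ) - 1)) := by
      apply sum_biUnion_le_aux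
      intro q _ p hp
      exact hnonneg p (Nat.prime_of_mem_primeFactors (Finset.mem_filter.mp hp).1)
    linarith
  have hXlog : 0 ≤ Real.log ((x ^ c : ℕ) : ℝ) := Real.log_natCast_nonneg _
  have hT : ∑ q ∈ G, ∑ p ∈ S q, (Real.log p - Real.log ((p:ℝ) - 1))
      ≤ 7/20 * Real.log ((x ^ c : ℕ) : ℝ) := by
    rcases Nat.eq_zero_or_pos G.card with h0 | h0
    · rw [Finset.card_eq_zero.mp h0]; simp; positivity
    · have h0' : (0:ℝ) < G.card := by exact_mod_cast h0
      have h1 := Finset.sum_le_sum hterm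
      rw [← Finset.mul_sum, Finset.sum_const, nsmul_eq_mul] at h1
      exact le_of_mul_le_mul_left h1 h0'
  have hlog := log_sub_log_totient N (by omega)
  have hfin : Real.log ((x ^ c : ℕ) : ℝ) + Real.log (Nat.totient N) < Real.log N := by
    rw [← Real.log_mul (by positivity) (by positivity)]
    apply Real.log_lt_log (by positivity)
    exact_mod_cast hsize
  linarith

lemma totient_mul_of_dvd' (a b : ℕ) (ha : 0 < a) (h : a ∣ b) :
    Nat.totient (a * b) = a * Nat.totient b := by
  have h1 := Nat.totient_gcd_mul_totient_mul a b
  rw [Nat.gcd_eq_left h] at h1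
  have h2 : 0 < Nat.totient a := Nat.totient_pos.mpr ha
  apply Nat.eq_of_mul_eq_mul_left h2
  rw [h1]; ring

lemma totient_pow_mul (d M k : ℕ) (hd : 0 < d) :
    Nat.totient (d ^ (k+1) * M) = d ^ k * Nat.totient (d * M) := by
  induction k with
  | zero => simp
  | succ k ih =>
    rw [pow_succ' d (k+1), mul_assoc, totient_mul_of_dvd' _ _ hd, ih, pow_succ', mul_assoc]
    exact Dvd.dvd.mul_right (dvd_pow_self d (by omega)) _

theorem phi_eq_pow_sub_pow (x y m n : ℕ) (hx : 0 < x) (hy : 0 < y)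
    (hm : 0 < m) (hn : 0 < n) (hxy : y < x)
    (heq : Nat.totient (x ^ m - y ^ m) = x ^ n - y ^ n) :
    m = 1 ∧ n = 1 ∧ x = y + 1 := by
  rcases Nat.lt_or_ge 1 m with hm2 | hm1
  · exfalso
    have hN3 := three_le x y m hy hxy hm2
    have hnm : n < m := by
      by_contra hge
      push Not at hge
      have h1 := Nat.totient_lt (x ^ m - y ^ m) (by omega)
      rw [heq] at h1
      obtain ⟨k, rfl⟩ : ∃ k, n = m + k := ⟨n - m, by omega⟩
      have hltm : y ^ m < x ^ m := Nat.pow_lt_pow_left hxy hm.ne'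
      have h2 : y ^ k ≤ x ^ k := Nat.pow_le_pow_left hxy.le k
      have h3 : 0 < y ^ k := by positivity
      have h4 : x ^ m - y ^ m ≤ x ^ (m+k) - y ^ (m+k) := by
        rw [pow_add, pow_add]
        have h5 : (x ^ m - y ^ m) * 1 ≤ (x ^ m - y ^ m) * x ^ k := Nat.mul_le_mul_left _ (by omega)
        rw [mul_one, Nat.sub_mul] at h5
        have h6 : y ^ m * y ^ k ≤ y ^ m * x ^ k := Nat.mul_le_mul_left _ h2
        omega
      omega
    obtain ⟨d, x1, y1, hd, hcop, hx1, hy1⟩ := Nat.exists_coprime' (Nat.gcd_pos_of_pos_left y hx)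
    subst hx1 hy1
    have hd0 : 0 < d := hd
    have hy10 : 0 < y1 := Nat.pos_of_mul_pos_right hy
    have hxy1 : y1 < x1 := Nat.lt_of_mul_lt_mul_right hxy
    apply core x1 y1 m n hy10 hn hxy1 hnm hcop
    have e1 : (x1 * d) ^ m - (y1 * d) ^ m = d ^ (m - 1 + 1) * (x1 ^ m - y1 ^ m) := by
      rw [show m - 1 + 1 = m by omega, mul_pow, mul_pow, ← Nat.sub_mul, mul_comm]
    have e2 : (x1 * d) ^ n - (y1 * d) ^ n = d ^ n * (x1 ^ n - y1 ^ n) := by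
      rw [mul_pow, mul_pow, ← Nat.sub_mul, mul_comm]
    rw [e1, e2, totient_pow_mul _ _ _ hd0, show m - 1 = n + (m - 1 - n) by omega, pow_add,
      mul_assoc] at heq
    have e3 := Nat.eq_of_mul_eq_mul_left (by positivity) heq
    rw [← e3]
    exact (Nat.totient_dvd_of_dvd (Dvd.intro_left d rfl)).trans (Dvd.intro_left _ rfl)
  · have hm1 : m = 1 := by omega
    subst hm1
    rw [pow_one, pow_one] at heq
    have h1 := Nat.totient_le (x - y)
    obtain ⟨k, rfl⟩ : ∃ k, n = k + 1 := ⟨n - 1, by omega⟩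
    have h2 : y ^ k ≤ x ^ k := Nat.pow_le_pow_left hxy.le k
    have h3 : 0 < y ^ k := by positivity
    have h5 : (x - y) * x ^ k ≤ x ^ (k+1) - y ^ (k+1) := by
      rw [pow_succ, pow_succ, Nat.sub_mul, mul_comm x, mul_comm y]
      have h6 : y ^ k * y ≤ x ^ k * y := Nat.mul_le_mul_right _ h2
      omega
    have hxk : x ^ k = 1 := by
      by_contra hne
      have h7 : 2 ≤ x ^ k := by omega
      nlinarith [Nat.sub_pos_of_lt hxy]
    have hk : k = 0 := by
      by_contra hne
      have := Nat.le_self_pow hne x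
      omega
    subst hk
    refine ⟨rfl, rfl, ?_⟩
    by_contra hne
    have := Nat.totient_lt (x - y) (by omega)
    simp at heq
    omega
end

section
/- For all positive integers x, y, z, m, n with x > y and 1 ≤ z ≤ x − y, if φ(z·(x^m − y^m)/(x − y)) = z·(x^n − y^n)/(x − y), then z = 1, m = 1 and n = 1. -/
lemma sum_log_le (S : Finset ℕ) : (∀ t ∈ S, 1 ≤ t) →
    ∑ t ∈ S, Real.log (1 + 1 / (t : ℝ)) ≤ Real.log ((S.card : ℝ) + 1) := by
  induction S using Finset.induction_on_max with
  | empty => simp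
  | insert a s has ih =>
    intro h
    have hnot : a ∉ s := fun hh => lt_irrefl _ (has a hh)
    rw [Finset.sum_insert hnot, Finset.card_insert_of_notMem hnot]
    have ih' := ih (fun t ht => h t (Finset.mem_insert_of_mem ht))
    have hcard : s.card + 1 ≤ a := by
      have hsub : s ⊆ Finset.Ico 1 a := by
        intro t ht
        exact Finset.mem_Ico.2 ⟨h t (Finset.mem_insert_of_mem ht), has t ht⟩
      have := Finset.card_le_card hsub
      have ha : 1 ≤ a := h a (Finset.mem_insert_self _ _)
      simp at this
      omega
    have hc : ((s.card : ℝ) + 1) ≤ a := by exact_mod_cast hcard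
    have hp : (0 : ℝ) < (s.card : ℝ) + 1 := by positivity
    have h1 : Real.log (1 + 1 / (a : ℝ)) ≤ Real.log (1 + 1 / ((s.card : ℝ) + 1)) := by
      apply Real.log_le_log
      · have : (0 : ℝ) < a := by linarith
        positivity
      · gcongr
    have h2 : Real.log (1 + 1 / ((s.card : ℝ) + 1)) + Real.log ((s.card : ℝ) + 1)
        = Real.log (((s.card + 1 : ℕ) : ℝ) + 1) := by
      rw [← Real.log_mul (by positivity) (by positivity)]
      congr 1
      push_cast
      field_simp
    linarith

lemma factorial_le_prod (S : Finset ℕ) : (∀ t ∈ S, 2 ≤ t) →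
    (S.card + 1).factorial ≤ ∏ t ∈ S, t := by
  induction S using Finset.induction_on_max with
  | empty => simp
  | insert a s has ih =>
    intro h
    have hnot : a ∉ s := fun hh => lt_irrefl _ (has a hh)
    rw [Finset.prod_insert hnot, Finset.card_insert_of_notMem hnot]
    have ih' := ih (fun t ht => h t (Finset.mem_insert_of_mem ht))
    have hcard : s.card + 1 + 1 ≤ a := by
      have hsub : s ⊆ Finset.Ico 2 a := by
        intro t ht
        exact Finset.mem_Ico.2 ⟨h t (Finset.mem_insert_of_mem ht), has t ht⟩
      have := Finset.card_le_card hsub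
      have ha : 2 ≤ a := h a (Finset.mem_insert_self _ _)
      simp at this
      omega
    rw [Nat.factorial_succ]
    exact Nat.mul_le_mul hcard ih'

/-- primes set: general -/
lemma sum_log_primes (S : Finset ℕ) (h : ∀ p ∈ S, 2 ≤ p) :
    ∑ p ∈ S, Real.log ((p : ℝ) / ((p : ℝ) - 1)) ≤ Real.log ((S.card : ℝ) + 1) := by
  have hinj : Set.InjOn (fun p => p - 1) (S : Set ℕ) := by
    intro p hp p' hp' e
    have := h p hp
    have := h p' hp'
    simp at e
    omega
  have h1 := sum_log_le (S.image (fun p => p - 1)) (by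
    intro t ht
    obtain ⟨p, hp, rfl⟩ := Finset.mem_image.1 ht
    have := h p hp
    omega)
  rw [Finset.sum_image hinj, Finset.card_image_of_injOn hinj] at h1
  refine le_trans (le_of_eq (Finset.sum_congr rfl ?_)) h1
  intro p hp
  have h2 := h p hp
  congr 1
  have : (2 : ℝ) ≤ p := by exact_mod_cast h2
  rw [Nat.cast_sub (by omega)]
  have : (p : ℝ) - 1 ≠ 0 := by linarith
  push_cast
  field_simp
  ring

lemma sum_log_primes_mod (q : ℕ) (hq : 1 ≤ q) (S : Finset ℕ) (h : ∀ p ∈ S, 2 ≤ p ∧ 2 * q ∣ p - 1) :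
    ∑ p ∈ S, Real.log ((p : ℝ) / ((p : ℝ) - 1)) ≤
      3 / (4 * (q : ℝ)) * Real.log ((S.card : ℝ) + 1) := by
  have hinj : Set.InjOn (fun p => (p - 1) / (2 * q)) (S : Set ℕ) := by
    intro p hp p' hp' e
    obtain ⟨h1, h2⟩ := h p hp
    obtain ⟨h3, h4⟩ := h p' hp'
    have := (Nat.div_left_inj h2 h4).1 e
    omega
  have h1 := sum_log_le (S.image (fun p => (p - 1) / (2 * q))) (by
    intro t ht
    obtain ⟨p, hp, rfl⟩ := Finset.mem_image.1 ht
    obtain ⟨h1, h2⟩ := h p hp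
    exact Nat.div_pos (Nat.le_of_dvd (by omega) h2) (by omega))
  rw [Finset.sum_image hinj, Finset.card_image_of_injOn hinj] at h1
  have hq' : (0 : ℝ) < q := by exact_mod_cast hq
  refine le_trans ?_ (mul_le_mul_of_nonneg_left h1 (by positivity))
  rw [Finset.mul_sum]
  apply Finset.sum_le_sum
  intro p hp
  obtain ⟨h2, h3⟩ := h p hp
  obtain ⟨t, ht⟩ := h3
  have htpos : 1 ≤ t := by
    rcases Nat.eq_zero_or_pos t with h0 | h0
    · subst h0; omega
    · exact h0
  have hdiv : (p - 1) / (2 * q) = t := by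
    rw [ht]; exact Nat.mul_div_cancel_left _ (by omega)
  simp only [hdiv]
  have hpt : (p : ℝ) = 1 + 2 * q * t := by
    have : p = 1 + 2 * q * t := by omega
    exact_mod_cast this
  have ht' : (1 : ℝ) ≤ t := by exact_mod_cast htpos
  have e1 : (p : ℝ) / ((p : ℝ) - 1) = 1 + 1 / (2 * q * t) := by
    rw [hpt]
    field_simp
    ring
  rw [e1]
  have h4 : Real.log (1 + 1 / (2 * q * t)) ≤ 1 / (2 * (q : ℝ) * t) := by
    have := Real.log_le_sub_one_of_pos (show (0 : ℝ) < 1 + 1 / (2 * q * t) by positivity)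
    linarith
  have h5 : 2 / 3 * (1 / (t : ℝ)) ≤ Real.log (1 + 1 / (t : ℝ)) := by
    have h6 := Real.le_log_one_add_of_nonneg (show (0 : ℝ) ≤ 1 / (t : ℝ) by positivity)
    refine le_trans ?_ h6
    have : (1 : ℝ) / t ≤ 1 := by
      rw [div_le_one (by linarith)]; exact ht'
    have h7 : (0 : ℝ) ≤ 1 / t := by positivity
    generalize (1 : ℝ) / t = u at *
    rw [le_div_iff₀ (by linarith)]
    nlinarith
  calc Real.log (1 + 1 / (2 * q * t)) ≤ 1 / (2 * (q : ℝ) * t) := h4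
    _ = 3 / (4 * (q : ℝ)) * (2 / 3 * (1 / (t : ℝ))) := by field_simp; norm_num
    _ ≤ _ := by gcongr

lemma totient_val (N q : ℕ) (hN : N ≠ 0) (hq : q.Prime) :
    padicValNat q N + (N.primeFactors.filter (fun p => q ∣ p - 1)).card ≤
      padicValNat q (Nat.totient N) + (if q ∣ N then 1 else 0) := by
  have := Fact.mk hq
  have key := Nat.totient_mul_prod_primeFactors N
  have hprod : ∏ p ∈ N.primeFactors, p ≠ 0 := by
    rw [Finset.prod_ne_zero_iff]
    intro p hp
    exact (Nat.prime_of_mem_primeFactors hp).ne_zero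
  have hprod1 : ∏ p ∈ N.primeFactors, (p - 1) ≠ 0 := by
    rw [Finset.prod_ne_zero_iff]
    intro p hp
    have := (Nat.prime_of_mem_primeFactors hp).two_le
    omega
  have htot : Nat.totient N ≠ 0 := (Nat.totient_pos.2 (Nat.pos_of_ne_zero hN)).ne'
  have h1 := congrArg (padicValNat q) key
  rw [padicValNat.mul htot hprod, padicValNat.mul hN hprod1] at h1
  have h2 : (N.primeFactors.filter (fun p => q ∣ p - 1)).card ≤
      padicValNat q (∏ p ∈ N.primeFactors, (p - 1)) := by
    rw [← padicValNat_dvd_iff_le hprod1]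
    rw [← Finset.prod_filter_mul_prod_filter_not N.primeFactors (fun p => q ∣ p - 1)]
    apply Dvd.dvd.mul_right
    rw [← Finset.prod_const]
    apply Finset.prod_dvd_prod_of_dvd
    intro p hp
    exact (Finset.mem_filter.1 hp).2
  have h3 : padicValNat q (∏ p ∈ N.primeFactors, p) ≤ (if q ∣ N then 1 else 0) := by
    have hsf : Squarefree (∏ p ∈ N.primeFactors, p) := by
      apply Finset.squarefree_prod_of_pairwise_isCoprime
      · intro p hp p' hp' hne
        exact Nat.coprime_iff_isRelPrime.1 ((Nat.coprime_primes (Nat.prime_of_mem_primeFactors hp)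
          (Nat.prime_of_mem_primeFactors hp')).2 hne)
      · intro p hp
        exact (Nat.prime_of_mem_primeFactors hp).squarefree
    split_ifs with hd
    · rw [← Nat.factorization_def _ hq]
      exact (Nat.squarefree_iff_factorization_le_one hprod).1 hsf q
    · rw [padicValNat.eq_zero_of_not_dvd]
      intro hh
      exact hd (hh.trans (Nat.prod_primeFactors_dvd N))
  omega

lemma log_ratio (N : ℕ) (hN : N ≠ 0) :
    Real.log ((N : ℝ) / (Nat.totient N : ℝ)) =
      ∑ p ∈ N.primeFactors, Real.log ((p : ℝ) / ((p : ℝ) - 1)) := by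
  have hp2 : ∀ p ∈ N.primeFactors, (2 : ℝ) ≤ p := by
    intro p hp
    exact_mod_cast (Nat.prime_of_mem_primeFactors hp).two_le
  rw [← Real.log_prod]
  · congr 1
    have key := Nat.totient_mul_prod_primeFactors N
    have key' : (Nat.totient N : ℝ) * ∏ p ∈ N.primeFactors, (p : ℝ) =
        N * ∏ p ∈ N.primeFactors, ((p : ℝ) - 1) := by
      have := congrArg (Nat.cast : ℕ → ℝ) key
      push_cast at this
      rw [this]
      congr 1
      apply Finset.prod_congr rfl
      intro p hp
      have := (Nat.prime_of_mem_primeFactors hp).two_le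
      rw [Nat.cast_sub (by omega)]; simp
    have htot : (0 : ℝ) < Nat.totient N := by exact_mod_cast (Nat.totient_pos.2 (Nat.pos_of_ne_zero hN))
    have h1 : (0 : ℝ) < ∏ p ∈ N.primeFactors, ((p : ℝ) - 1) := by
      apply Finset.prod_pos
      intro p hp
      have := hp2 p hp
      linarith
    rw [Finset.prod_div_distrib, div_eq_div_iff htot.ne' h1.ne']
    linarith
  · intro p hp
    have := hp2 p hp
    have : (0 : ℝ) < p / (p - 1) := div_pos (by linarith) (by linarith)
    exact this.ne'


lemma exists_ord (a b p : ℕ) (hp : p.Prime) (hb : ¬ p ∣ b) (ha : ¬ p ∣ a) :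
    ∃ o, (∀ e : ℕ, (p : ℤ) ∣ (a : ℤ) ^ e - (b : ℤ) ^ e ↔ o ∣ e) ∧ o ∣ p - 1 := by
  have := Fact.mk hp
  have hb' : (b : ZMod p) ≠ 0 := by
    rwa [Ne, ZMod.natCast_eq_zero_iff]
  have ha' : (a : ZMod p) ≠ 0 := by
    rwa [Ne, ZMod.natCast_eq_zero_iff]
  refine ⟨orderOf ((a : ZMod p) / b), ?_, ?_⟩
  · intro e
    rw [orderOf_dvd_iff_pow_eq_one, div_pow, div_eq_one_iff_eq (pow_ne_zero _ hb'),
      ← ZMod.intCast_zmod_eq_zero_iff_dvd]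
    push_cast
    rw [sub_eq_zero]
  · rw [orderOf_dvd_iff_pow_eq_one]
    exact ZMod.pow_card_sub_one_eq_one (div_ne_zero ha' hb')

open Polynomial in
noncomputable def hcyc (a b : ℤ) (d : ℕ) : ℤ := (scaleRoots (cyclotomic d ℤ) b).eval a

open Polynomial in
lemma scale_X_pow_sub_one (a b : ℤ) (n : ℕ) (hn : 0 < n) :
    (scaleRoots (X ^ n - 1 : ℤ[X]) b).eval a = a ^ n - b ^ n := by
  have h : scaleRoots (X ^ n - 1 : ℤ[X]) b = X ^ n - C (b ^ n) := by
    ext i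
    rw [coeff_scaleRoots]
    have hd : (X ^ n - 1 : ℤ[X]).natDegree = n := by
      simpa using natDegree_X_pow_sub_C (R := ℤ) (n := n) (r := 1)
    rw [hd]
    simp only [coeff_sub, coeff_X_pow, coeff_one, coeff_C]
    by_cases h1 : i = n
    · subst h1
      simp [hn.ne']
    · by_cases h2 : i = 0
      · subst h2
        simp [hn.ne]
      · simp [h1, h2]
  rw [h]
  simp

open Polynomial in
lemma hcyc_mul_dvd (a b : ℤ) (d e : ℕ) (hd : 0 < d) (he : e ∈ d.properDivisors) :
    hcyc a b d * (a ^ e - b ^ e) ∣ a ^ d - b ^ d := by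
  have he0 : 0 < e := Nat.pos_of_mem_properDivisors he
  have h := X_pow_sub_one_mul_cyclotomic_dvd_X_pow_sub_one_of_dvd ℤ he
  have h2 := scaleRoots_dvd _ _ (r := b) h
  rw [mul_scaleRoots_of_noZeroDivisors] at h2
  have h3 := eval_dvd (x := a) h2
  rw [eval_mul, scale_X_pow_sub_one _ _ _ he0, scale_X_pow_sub_one _ _ _ hd] at h3
  rw [mul_comm]
  exact h3

open Polynomial in
lemma hcyc_lower (a b : ℕ) (d : ℕ) (hb : 0 < b) (hab : b + 2 ≤ a) (hd : 2 ≤ d) :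
    (2 : ℤ) ^ (Nat.totient d) < hcyc a b d := by
  have hb' : (0 : ℝ) < b := by exact_mod_cast hb
  have h1 : (1 : ℝ) < (a : ℝ) / b := by
    rw [one_lt_div hb']
    exact_mod_cast (by omega : b < a)
  have h2 := sub_one_pow_totient_lt_cyclotomic_eval hd h1
  have h3 := scaleRoots_eval₂_mul (p := cyclotomic d ℤ) (Int.castRingHom ℝ) ((a : ℝ) / b) (b : ℤ)
  have h4 : (hcyc a b d : ℝ) = (b : ℝ) ^ (Nat.totient d) * (cyclotomic d ℝ).eval ((a : ℝ) / b) := by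
    have e0 : eval₂ (Int.castRingHom ℝ) ((a : ℝ) / b) (cyclotomic d ℤ)
        = eval ((a : ℝ) / b) (cyclotomic d ℝ) := by
      rw [← eval_map, map_cyclotomic]
    rw [natDegree_cyclotomic, e0] at h3
    have e1 : (Int.castRingHom ℝ) (b : ℤ) * ((a : ℝ) / b) = ((a : ℤ) : ℝ) := by
      simp
      field_simp
    rw [e1] at h3
    have e2 : (Int.castRingHom ℝ) (b : ℤ) = (b : ℝ) := by simp
    rw [e2] at h3
    rw [← h3, hcyc]
    have := eval₂_at_apply (p := scaleRoots (cyclotomic d ℤ) (b : ℤ)) (Int.castRingHom ℝ) (a : ℤ)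
    simpa using this.symm
  have h5 : (2 : ℝ) ^ (Nat.totient d) < hcyc a b d := by
    rw [h4]
    calc (2 : ℝ) ^ (Nat.totient d) ≤ ((b : ℝ) * ((a : ℝ) / b - 1)) ^ (Nat.totient d) := by
          apply pow_le_pow_left₀ (by norm_num)
          have : (b : ℝ) * ((a : ℝ) / b - 1) = a - b := by field_simp
          rw [this]
          have : (b : ℝ) + 2 ≤ a := by exact_mod_cast hab
          linarith
      _ = (b : ℝ) ^ (Nat.totient d) * ((a : ℝ) / b - 1) ^ (Nat.totient d) := by rw [mul_pow]
      _ < _ := by gcongr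
  exact_mod_cast h5

/-- local analysis at a prime dividing the homogenized cyclotomic value -/
lemma hcyc_prime (a b d p : ℕ) (hcop : Nat.Coprime a b) (hba : b < a) (hd : 2 ≤ d) (hodd : Odd d)
    (hp : p.Prime) (hpP : (p : ℤ) ∣ hcyc a b d)
    (hno : ¬ ∀ e : ℕ, (p : ℤ) ∣ (a : ℤ) ^ e - (b : ℤ) ^ e ↔ d ∣ e) :
    p ∣ d ∧ ¬ ((p : ℤ) * p ∣ hcyc a b d) ∧ ∀ r : ℕ, r.Prime → r ∣ d → r ≠ p → r ∣ p - 1 := by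
  have hpZ : Prime (p : ℤ) := Nat.prime_iff_prime_int.1 hp
  have h1 : (p : ℤ) ∣ (a : ℤ) ^ d - (b : ℤ) ^ d := by
    have h := hcyc_mul_dvd a b d 1 (by omega) (by simp; omega)
    exact (hpP.mul_right _).trans h
  have hpb : ¬ p ∣ b := by
    intro hh
    have hh' : (p : ℤ) ∣ (b : ℤ) ^ d := dvd_pow (by exact_mod_cast hh) (by omega)
    have h2 : (p : ℤ) ∣ (a : ℤ) ^ d := by
      have := dvd_add h1 hh'
      simpa using this
    have h3 : p ∣ a := by exact_mod_cast hpZ.dvd_of_dvd_pow h2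
    exact hp.one_lt.ne' (Nat.dvd_one.1 (hcop ▸ Nat.dvd_gcd h3 hh))
  have hpa : ¬ p ∣ a := by
    intro hh
    have hh' : (p : ℤ) ∣ (a : ℤ) ^ d := dvd_pow (by exact_mod_cast hh) (by omega)
    have h2 : (p : ℤ) ∣ (b : ℤ) ^ d := by
      have := dvd_sub hh' h1
      simpa using this
    exact hpb (by exact_mod_cast hpZ.dvd_of_dvd_pow h2)
  obtain ⟨o, ho, hop⟩ := exists_ord a b p hp hpb hpa
  have hod : o ∣ d := (ho d).1 h1
  obtain ⟨t, ht⟩ := hod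
  have ht1 : t ≠ 1 := by
    rintro rfl
    apply hno
    intro e
    rw [ho e, ht, mul_one]
  -- each prime of t is p
  have hstep : ∀ r : ℕ, r.Prime → r ∣ t → r = p ∧ ¬ ((p : ℤ) * p ∣ hcyc a b d) := by
    intro r hr hrt
    obtain ⟨t', rfl⟩ := hrt
    obtain ⟨e, he⟩ : ∃ e, e = o * t' := ⟨_, rfl⟩
    have hde : d = e * r := by rw [ht, he]; ring
    have he0 : 0 < e := by
      rcases Nat.eq_zero_or_pos e with h | h
      · rw [h] at hde; omega
      · exact h
    have hed : e ∈ d.properDivisors := by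
      rw [Nat.mem_properDivisors]
      refine ⟨⟨r, hde⟩, ?_⟩
      have := hr.two_le
      nlinarith
    have hpe : (p : ℤ) ∣ (a : ℤ) ^ e - (b : ℤ) ^ e := (ho e).2 ⟨t', he⟩
    have hne : (a : ℤ) ^ e - (b : ℤ) ^ e ≠ 0 := by
      have : (b : ℤ) ^ e < (a : ℤ) ^ e := by
        exact_mod_cast Nat.pow_lt_pow_left hba he0.ne'
      omega
    have hgs : hcyc a b d ∣ ∑ i ∈ Finset.range r, ((a : ℤ) ^ e) ^ i * ((b : ℤ) ^ e) ^ (r - 1 - i) := by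
      have h := hcyc_mul_dvd a b d e (by omega) hed
      have h8 : (a : ℤ) ^ d - (b : ℤ) ^ d = (∑ i ∈ Finset.range r,
          ((a : ℤ) ^ e) ^ i * ((b : ℤ) ^ e) ^ (r - 1 - i)) * ((a : ℤ) ^ e - (b : ℤ) ^ e) := by
        rw [geom_sum₂_mul, hde, pow_mul, pow_mul]
      rw [h8] at h
      exact (mul_dvd_mul_iff_right hne).1 h
    have hpr : r = p := by
      have h3 := hpP.trans hgs
      rw [dvd_geom_sum₂_iff_of_dvd_sub hpe] at h3
      rcases hpZ.dvd_or_dvd h3 with h4 | h4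
      · have : p ∣ r := by exact_mod_cast h4
        exact ((Nat.prime_dvd_prime_iff_eq hp hr).1 this).symm
      · exfalso
        have := hpZ.dvd_of_dvd_pow (hpZ.dvd_of_dvd_pow h4)
        exact hpb (by exact_mod_cast this)
    refine ⟨hpr, ?_⟩
    subst hpr
    intro hsq
    have hrodd : Odd r := by
      rw [hde] at hodd
      exact (Nat.odd_mul.1 hodd).2
    have hna : ¬ (r : ℤ) ∣ (a : ℤ) ^ e := by
      intro hh
      exact hpa (by exact_mod_cast hpZ.dvd_of_dvd_pow hh)
    have h5 := emultiplicity_geom_sum₂_eq_one hpZ hrodd hpe hna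
    have h6 : (r : ℤ) ^ 2 ∣ ∑ i ∈ Finset.range r, ((a : ℤ) ^ e) ^ i * ((b : ℤ) ^ e) ^ (r - 1 - i) := by
      rw [sq]; exact hsq.trans hgs
    have h7 := le_emultiplicity_of_pow_dvd h6
    rw [h5] at h7
    norm_num at h7
  obtain ⟨r, hr, hrt⟩ := Nat.exists_prime_and_dvd ht1
  obtain ⟨hrp, hsq⟩ := hstep r hr hrt
  refine ⟨?_, hsq, ?_⟩
  · rw [ht, ← hrp]; exact hrt.mul_left _
  · intro r' hr' hr'd hne
    rw [ht] at hr'd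
    rcases hr'.dvd_mul.1 hr'd with h | h
    · exact h.trans hop
    · exact absurd (hstep r' hr' h).1 hne

lemma exists_prim (a b d : ℕ) (hcop : Nat.Coprime a b) (hb : 0 < b) (hba : b + 2 ≤ a)
    (hd : 2 ≤ d) (hodd : Odd d) :
    ∃ p : ℕ, p.Prime ∧ ∀ e : ℕ, (p : ℤ) ∣ (a : ℤ) ^ e - (b : ℤ) ^ e ↔ d ∣ e := by
  by_contra hcon
  push Not at hcon
  have key : ∀ p : ℕ, p.Prime → (p : ℤ) ∣ hcyc a b d →
      p ∣ d ∧ ¬ ((p : ℤ) * p ∣ hcyc a b d) ∧ ∀ r : ℕ, r.Prime → r ∣ d → r ≠ p → r ∣ p - 1 := by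
    intro p hp hpP
    apply hcyc_prime a b d p hcop (by omega) hd hodd hp hpP
    intro h
    obtain ⟨e, he⟩ := hcon p hp
    rcases he with he | he
    · exact he.2 ((h e).1 he.1)
    · exact he.1 ((h e).2 he.2)
  have hlow := hcyc_lower a b d hb hba hd
  obtain ⟨P, hP⟩ : ∃ P : ℕ, hcyc a b d = P := by
    refine ⟨(hcyc a b d).toNat, ?_⟩
    rw [Int.toNat_of_nonneg]
    have : (0 : ℤ) < 2 ^ (Nat.totient d) := by positivity
    omega
  rw [hP] at hlow key
  have hlow' : 2 ^ (Nat.totient d) < P := by exact_mod_cast hlow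
  have hP1 : P ≠ 1 := by
    have := Nat.one_le_two_pow (n := Nat.totient d)
    omega
  obtain ⟨p, hp, c, hc⟩ := Nat.exists_prime_and_dvd hP1
  obtain ⟨hpd, hsq, hr⟩ := key p hp (by rw [hc]; push_cast; exact dvd_mul_right _ _)
  have hc1 : c = 1 := by
    by_contra hc1
    obtain ⟨p', hp', hp'c⟩ := Nat.exists_prime_and_dvd hc1
    have hne : p' ≠ p := by
      rintro rfl
      apply hsq
      rw [hc]
      exact_mod_cast Nat.mul_dvd_mul_left _ hp'c
    obtain ⟨hpd', hsq', hr'⟩ := key p' hp' (by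
      have : p' ∣ P := by rw [hc]; exact hp'c.mul_left _
      exact_mod_cast this)
    have h1 := Nat.le_of_dvd (by have := hp.two_le; omega) (hr p' hp' hpd' hne)
    have h2 := Nat.le_of_dvd (by have := hp'.two_le; omega) (hr' p hp hpd hne.symm)
    have := hp.two_le
    omega
  rw [hc1, mul_one] at hc
  rw [hc] at hlow'
  have h3 : Nat.totient p ∣ Nat.totient d := Nat.totient_dvd_of_dvd hpd
  rw [Nat.totient_prime hp] at h3
  have h4 := Nat.le_of_dvd (Nat.totient_pos.2 (by omega)) h3
  have h5 : 2 ^ (p - 1) ≤ 2 ^ (Nat.totient d) := Nat.pow_le_pow_right (by norm_num) h4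
  have h6 : p - 1 < 2 ^ (p - 1) := Nat.lt_two_pow_self
  omega


structure Setup (a b D z m n k N : ℕ) : Prop where
  cop : Nat.Coprime a b
  hb : 0 < b
  hba : b < a
  hD : 0 < D
  hz : 0 < z
  hzD : z ≤ D * (a - b)
  hn : 0 < n
  hk : 0 < k
  hmk : m = n + k
  hNm : (a - b) * N = z * D ^ (m - 1) * (a ^ m - b ^ m)
  hNn : (a - b) * Nat.totient N = z * D ^ (n - 1) * (a ^ n - b ^ n)

/-- number of prime factors of `N` that are 1 mod `q` -/
def RR (N q : ℕ) : ℕ := (N.primeFactors.filter (fun p => q ∣ p - 1)).card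

namespace Setup
variable {a b D z m n k N : ℕ}

lemma pow_pos' (s : Setup a b D z m n k N) (e : ℕ) (he : 0 < e) : 0 < a ^ e - b ^ e := by
  have := Nat.pow_lt_pow_left s.hba he.ne'
  omega

lemma N_pos (s : Setup a b D z m n k N) : 0 < N := by
  have h := s.hNm
  have h1 := s.pow_pos' m (by have := s.hmk; have := s.hn; omega)
  rcases Nat.eq_zero_or_pos N with h0 | h0
  · rw [h0, mul_zero] at h
    have := s.hD
    have := s.hz
    have : 0 < z * D ^ (m - 1) * (a ^ m - b ^ m) := by positivity
    omega
  · exact h0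

lemma val_ineq (s : Setup a b D z m n k N) (q : ℕ) (hq : q.Prime) :
    RR N q + padicValNat q (a ^ m - b ^ m) ≤
      padicValNat q (a ^ n - b ^ n) + (if q ∣ N then 1 else 0) := by
  have := Fact.mk hq
  have h := totient_val N q s.N_pos.ne' hq
  have hm := s.pow_pos' m (by have := s.hmk; have := s.hn; omega)
  have hn := s.pow_pos' n s.hn
  have hD := s.hD
  have hz := s.hz
  have h1 : padicValNat q ((a - b) * N) = padicValNat q (z * D ^ (m - 1) * (a ^ m - b ^ m)) := by
    rw [s.hNm]
  have h2 : padicValNat q ((a - b) * Nat.totient N) =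
      padicValNat q (z * D ^ (n - 1) * (a ^ n - b ^ n)) := by
    rw [s.hNn]
  have hab : a - b ≠ 0 := by have := s.hba; omega
  rw [padicValNat.mul hab s.N_pos.ne', padicValNat.mul (by positivity) hm.ne',
    padicValNat.mul hz.ne' (by positivity), padicValNat.pow] at h1
  rw [padicValNat.mul hab (Nat.totient_pos.2 s.N_pos).ne', padicValNat.mul (by positivity) hn.ne',
    padicValNat.mul hz.ne' (by positivity), padicValNat.pow] at h2
  have h3 : (n - 1) * padicValNat q D ≤ (m - 1) * padicValNat q D := by
    apply Nat.mul_le_mul_right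
    have := s.hmk
    omega
  unfold RR
  omega

lemma ratio (s : Setup a b D z m n k N) : (D * a) ^ k * Nat.totient N < N := by
  have hm := s.pow_pos' m (by have := s.hmk; have := s.hn; omega)
  have hn := s.pow_pos' n s.hn
  have hD := s.hD
  have hz := s.hz
  have hb := s.hb
  have hba := s.hba
  have hab : 0 < a - b := by omega
  have h1 : a ^ k * (a ^ n - b ^ n) < a ^ m - b ^ m := by
    rw [s.hmk, pow_add, pow_add, Nat.mul_sub, mul_comm (a ^ n)]
    have h2 : b ^ k < a ^ k := Nat.pow_lt_pow_left hba s.hk.ne'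
    have h3 : b ^ n < a ^ n := Nat.pow_lt_pow_left hba s.hn.ne'
    have h4 : b ^ n * b ^ k < a ^ k * b ^ n := by
      rw [mul_comm]; apply Nat.mul_lt_mul_of_pos_right h2; positivity
    have h5 : a ^ k * b ^ n < a ^ k * a ^ n := by
      apply Nat.mul_lt_mul_of_pos_left h3; omega
    omega
  have h6 : D ^ k * D ^ (n - 1) = D ^ (m - 1) := by
    rw [← pow_add]; congr 1
    have := s.hmk; have := s.hn; omega
  have h7 : (a - b) * ((D * a) ^ k * Nat.totient N) < (a - b) * N := by
    calc (a - b) * ((D * a) ^ k * Nat.totient N)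
        = (D * a) ^ k * ((a - b) * Nat.totient N) := by ring
      _ = z * (D ^ k * D ^ (n - 1)) * (a ^ k * (a ^ n - b ^ n)) := by
          rw [s.hNn, mul_pow]; ring
      _ < z * D ^ (m - 1) * (a ^ m - b ^ m) := by
          rw [h6]
          apply Nat.mul_lt_mul_of_pos_left h1
          positivity
      _ = (a - b) * N := s.hNm.symm
  exact Nat.lt_of_mul_lt_mul_left h7

lemma log_lt (s : Setup a b D z m n k N) :
    Real.log (((D * a) ^ k : ℕ) : ℝ) < ∑ p ∈ N.primeFactors, Real.log ((p : ℝ) / ((p : ℝ) - 1)) := by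
  rw [← log_ratio N s.N_pos.ne']
  have h := s.ratio
  have ht : (0 : ℝ) < Nat.totient N := by exact_mod_cast Nat.totient_pos.2 s.N_pos
  have hba := s.hba
  have hD := s.hD
  apply Real.log_lt_log
  · have : 0 < (D * a) ^ k := by
      have : 0 < a := by omega
      positivity
    exact_mod_cast this
  · rw [lt_div_iff₀ ht]
    exact_mod_cast h

lemma X_le (s : Setup a b D z m n k N) : (D * a) ^ k ≤ N.primeFactors.card := by
  have h := s.log_lt
  have h2 := sum_log_primes N.primeFactors (fun p hp => (Nat.prime_of_mem_primeFactors hp).two_le)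
  have h3 := lt_of_lt_of_le h h2
  have h4 := (Real.log_lt_log_iff (by
    have hba := s.hba
    have hD := s.hD
    have : 0 < (D * a) ^ k := by
      have : 0 < a := by omega
      positivity
    exact_mod_cast this) (by positivity)).1 h3
  have : (D * a) ^ k < N.primeFactors.card + 1 := by exact_mod_cast h4
  omega

lemma two_val (s : Setup a b D z m n k N) :
    padicValNat 2 (a ^ m - b ^ m) < padicValNat 2 (a ^ n - b ^ n) := by
  by_contra hcon
  push Not at hcon
  have h := s.val_ineq 2 Nat.prime_two
  have hX := s.X_le
  have hba := s.hba
  have hb := s.hb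
  have hD := s.hD
  have hx2 : 2 ≤ D * a := by nlinarith
  have hXx : D * a ≤ (D * a) ^ k := Nat.le_self_pow s.hk.ne' _
  have hRR : RR N 2 ≤ if 2 ∣ N then 1 else 0 := by omega
  have hsub : N.primeFactors ⊆ insert 2 (N.primeFactors.filter (fun p => 2 ∣ p - 1)) := by
    intro p hp
    have hpp := Nat.prime_of_mem_primeFactors hp
    rcases hpp.eq_two_or_odd with h2 | h2
    · simp [h2]
    · rw [Finset.mem_insert, Finset.mem_filter]
      right
      exact ⟨hp, by omega⟩
  by_cases h2 : 2 ∣ N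
  · rw [if_pos h2] at hRR
    have h3 := (Finset.card_le_card hsub).trans (Finset.card_insert_le _ _)
    change _ ≤ RR N 2 + 1 at h3
    have h4 : D * a = 2 := by omega
    have hD1 : D = 1 := by nlinarith
    subst hD1
    have ha : a = 2 := by omega
    subst ha
    have hb1 : b = 1 := by omega
    subst hb1
    have hz1 : z = 1 := by have := s.hz; have := s.hzD; omega
    subst hz1
    have h5 := s.hNm
    simp only [one_pow, mul_one, one_mul] at h5
    have hm : m = (m - 1) + 1 := by have := s.hmk; have := s.hn; omega
    rw [hm, pow_succ] at h5
    have := Nat.one_le_two_pow (n := m - 1)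
    omega
  · rw [if_neg h2] at hRR
    have h3 : N.primeFactors = ∅ := by
      have h4 : N.primeFactors.filter (fun p => 2 ∣ p - 1) = ∅ := by
        rw [← Finset.card_eq_zero]
        exact Nat.le_zero.1 hRR
      rw [h4] at hsub
      rw [Finset.eq_empty_iff_forall_notMem]
      intro p hp
      have := hsub hp
      simp at this
      rw [this] at hp
      exact h2 (Nat.dvd_of_mem_primeFactors hp)
    rw [h3] at hX
    simp at hX
    omega

lemma odd_ab (s : Setup a b D z m n k N) : Odd a ∧ Odd b := by
  have h := s.two_val
  have h2 : 2 ∣ a ^ n - b ^ n := by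
    by_contra h2
    rw [padicValNat.eq_zero_of_not_dvd h2] at h
    omega
  have hlt : b ^ n < a ^ n := Nat.pow_lt_pow_left s.hba s.hn.ne'
  have h3 : Even (a ^ n) ↔ Even (b ^ n) := by
    rw [Nat.even_iff, Nat.even_iff]
    omega
  rw [Nat.even_pow' s.hn.ne', Nat.even_pow' s.hn.ne'] at h3
  rcases Nat.even_or_odd a with ha | ha
  · have hb := h3.1 ha
    have := Nat.dvd_gcd ha.two_dvd hb.two_dvd
    rw [s.cop] at this
    omega
  · refine ⟨ha, ?_⟩
    rw [← Nat.not_even_iff_odd] at ha ⊢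
    tauto

lemma two_val_mn (s : Setup a b D z m n k N) : padicValNat 2 m < padicValNat 2 n := by
  by_contra hcon
  push Not at hcon
  have h := s.two_val
  obtain ⟨ha, hb⟩ := s.odd_ab
  have hn := s.hn
  have hba := s.hba
  set α := padicValNat 2 n with hα
  obtain ⟨n', hn'⟩ : 2 ^ α ∣ n := pow_padicValNat_dvd
  obtain ⟨m', hm'⟩ : 2 ^ α ∣ m := (pow_dvd_pow 2 hcon).trans pow_padicValNat_dvd
  have hn2 : ¬ 2 ∣ n' := by
    rintro ⟨c, hc⟩
    have : 2 ^ (α + 1) ∣ n := ⟨c, by rw [hn', hc]; ring⟩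
    exact pow_succ_padicValNat_not_dvd hn.ne' this
  have hA : Odd (a ^ 2 ^ α) := ha.pow
  have hB : Odd (b ^ 2 ^ α) := hb.pow
  have hlt : b ^ 2 ^ α < a ^ 2 ^ α := Nat.pow_lt_pow_left hba (by positivity)
  have hlt2 : b ^ n < a ^ n := Nat.pow_lt_pow_left hba hn.ne'
  have hAZ : Odd ((a : ℤ) ^ 2 ^ α) := by exact_mod_cast hA
  have hBZ : Odd ((b : ℤ) ^ 2 ^ α) := by exact_mod_cast hB
  have e := emultiplicity_pow_sub_pow_of_prime Int.prime_two (x := (a : ℤ) ^ 2 ^ α)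
    (y := (b : ℤ) ^ 2 ^ α) (hAZ.sub_odd hBZ).two_dvd (by
      rw [← even_iff_two_dvd, Int.not_even_iff_odd]; exact hAZ) (n := n') (by exact_mod_cast hn2)
  rw [← pow_mul, ← pow_mul, ← hn'] at e
  have e1 : (a : ℤ) ^ n - (b : ℤ) ^ n = ((a ^ n - b ^ n : ℕ) : ℤ) := by
    push_cast [hlt2.le]; rfl
  have e2 : (a : ℤ) ^ 2 ^ α - (b : ℤ) ^ 2 ^ α = ((a ^ 2 ^ α - b ^ 2 ^ α : ℕ) : ℤ) := by
    push_cast [hlt.le]; rfl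
  rw [e1, e2] at e
  have e3 : padicValNat 2 (a ^ n - b ^ n) = padicValNat 2 (a ^ 2 ^ α - b ^ 2 ^ α) := by
    have h2 : ((2 : ℕ) : ℤ) = 2 := rfl
    rw [← h2, Int.natCast_emultiplicity, Int.natCast_emultiplicity,
      ← padicValNat_eq_emultiplicity (by omega), ← padicValNat_eq_emultiplicity (by omega)] at e
    exact_mod_cast e
  have e4 : a ^ 2 ^ α - b ^ 2 ^ α ∣ a ^ m - b ^ m := by
    rw [hm', pow_mul, pow_mul]
    exact Nat.sub_dvd_pow_sub_pow _ _ _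
  have hmp := s.pow_pos' m (by have := s.hmk; omega)
  have e5 : padicValNat 2 (a ^ 2 ^ α - b ^ 2 ^ α) ≤ padicValNat 2 (a ^ m - b ^ m) := by
    rw [← padicValNat_dvd_iff_le hmp.ne']
    exact pow_padicValNat_dvd.trans e4
  omega

end Setup


def UU (a b e : ℕ) : ℕ := ∑ i ∈ Finset.range e, a ^ i * b ^ (e - 1 - i)

lemma UU_mul (a b e : ℕ) (h : b ≤ a) : (a - b) * UU a b e = a ^ e - b ^ e := by
  have h2 : b ^ e ≤ a ^ e := Nat.pow_le_pow_left h e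
  have := geom_sum₂_mul (a : ℤ) (b : ℤ) e
  zify [h, h2]
  rw [← this, UU]
  push_cast
  ring

/-- the set of good primes -/
def QQ (m n : ℕ) : Finset ℕ := m.primeFactors.filter (fun q => padicValNat q n < padicValNat q m)

namespace Setup
variable {a b D z m n k N : ℕ}

lemma hm0 (s : Setup a b D z m n k N) : 0 < m := by
  have := s.hmk; have := s.hn; omega

lemma N_eq (s : Setup a b D z m n k N) : N = z * D ^ (m - 1) * UU a b m := by
  have h := s.hNm
  rw [← UU_mul a b m s.hba.le] at h
  have hab : 0 < a - b := by have := s.hba; omega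
  apply Nat.eq_of_mul_eq_mul_left hab
  rw [h]; ring

lemma a3 (s : Setup a b D z m n k N) : b + 2 ≤ a := by
  obtain ⟨⟨c, hc⟩, ⟨d, hd⟩⟩ := s.odd_ab
  have := s.hba
  omega

lemma zdvd (s : Setup a b D z m n k N) (p e : ℕ) :
    (p : ℤ) ∣ (a : ℤ) ^ e - (b : ℤ) ^ e ↔ p ∣ a ^ e - b ^ e := by
  have h2 : b ^ e ≤ a ^ e := Nat.pow_le_pow_left s.hba.le e
  rw [← Int.natCast_dvd_natCast]
  push_cast [h2]
  rfl

lemma not_dvd_ab (s : Setup a b D z m n k N) (p e : ℕ) (hp : p.Prime) (he : 0 < e)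
    (h : p ∣ a ^ e - b ^ e) : ¬ p ∣ a ∧ ¬ p ∣ b := by
  have h2 : b ^ e ≤ a ^ e := Nat.pow_le_pow_left s.hba.le e
  have hiff : p ∣ a ^ e ↔ p ∣ b ^ e := by
    have e1 : a ^ e = (a ^ e - b ^ e) + b ^ e := by omega
    rw [e1]
    exact (Nat.dvd_add_right h)
  have hiff2 : p ∣ a ↔ p ∣ b := by
    rw [hp.prime.dvd_pow_iff_dvd he.ne'] at hiff
    rw [hiff, hp.prime.dvd_pow_iff_dvd he.ne']
  have hno : ¬ (p ∣ a ∧ p ∣ b) := by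
    rintro ⟨h3, h4⟩
    have := Nat.dvd_gcd h3 h4
    rw [s.cop] at this
    exact hp.one_lt.ne' (Nat.dvd_one.1 this)
  tauto

lemma prim_in (s : Setup a b D z m n k N) (d : ℕ) (hd : 2 ≤ d) (hodd : Odd d) (hdm : d ∣ m) :
    ∃ p, p ∈ N.primeFactors ∧ d ∣ p - 1 ∧ ∀ e : ℕ, p ∣ a ^ e - b ^ e ↔ d ∣ e := by
  obtain ⟨p, hp, h⟩ := exists_prim a b d s.cop s.hb s.a3 hd hodd
  simp only [s.zdvd] at h
  have h1 : p ∣ a ^ m - b ^ m := (h m).2 hdm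
  have h2 : ¬ p ∣ a - b := by
    intro hh
    have := (h 1).1 (by simpa using hh)
    have := Nat.le_of_dvd one_pos this
    omega
  refine ⟨p, ?_, ?_, h⟩
  · rw [Nat.mem_primeFactors]
    refine ⟨hp, ?_, s.N_pos.ne'⟩
    have h3 : p ∣ (a - b) * N := by rw [s.hNm]; exact h1.mul_left _
    exact (hp.dvd_mul.1 h3).resolve_left h2
  · obtain ⟨hpa, hpb⟩ := s.not_dvd_ab p m hp s.hm0 h1
    obtain ⟨o, ho, hop⟩ := exists_ord a b p hp hpb hpa
    simp only [s.zdvd] at ho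
    have : d ∣ o := (h o).1 ((ho o).2 dvd_rfl)
    exact this.trans hop

lemma good_prime (_ : Setup a b D z m n k N) {q : ℕ} (hq : q ∈ QQ m n) : q.Prime := by
  rw [QQ, Finset.mem_filter] at hq
  exact Nat.prime_of_mem_primeFactors hq.1

lemma good_dvd (_ : Setup a b D z m n k N) {q : ℕ} (hq : q ∈ QQ m n) : q ∣ m := by
  rw [QQ, Finset.mem_filter] at hq
  exact Nat.dvd_of_mem_primeFactors hq.1

lemma good_val (_ : Setup a b D z m n k N) {q : ℕ} (hq : q ∈ QQ m n) :
    padicValNat q n < padicValNat q m := by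
  rw [QQ, Finset.mem_filter] at hq
  exact hq.2

lemma good_odd (s : Setup a b D z m n k N) {q : ℕ} (hq : q ∈ QQ m n) : Odd q := by
  rcases (s.good_prime hq).eq_two_or_odd' with h | h
  · subst h
    have := s.good_val hq
    have := s.two_val_mn
    omega
  · exact h

lemma good_three (s : Setup a b D z m n k N) {q : ℕ} (hq : q ∈ QQ m n) : 3 ≤ q := by
  obtain ⟨c, hc⟩ := s.good_odd hq
  have := (s.good_prime hq).two_le
  omega

lemma RR_pos (s : Setup a b D z m n k N) {q : ℕ} (hq : q ∈ QQ m n) : 1 ≤ RR N q := by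
  obtain ⟨p, hp, hd, -⟩ := s.prim_in q (s.good_prime hq).two_le (s.good_odd hq) (s.good_dvd hq)
  rw [RR, Nat.one_le_iff_ne_zero, Finset.card_ne_zero]
  exact ⟨p, Finset.mem_filter.2 ⟨hp, hd⟩⟩

lemma good_not_dvd (s : Setup a b D z m n k N) {q : ℕ} (hq : q ∈ QQ m n) : ¬ q ∣ a - b := by
  intro h
  have h1 := s.RR_pos hq
  have hp := s.good_prime hq
  have := Fact.mk hp
  have h2 := s.val_ineq q hp
  have hqa := (s.not_dvd_ab q 1 hp one_pos (by simpa using h)).1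
  have h3 := s.good_val hq
  rw [padicValNat.pow_sub_pow (s.good_odd hq) s.hba h hqa s.hm0.ne',
    padicValNat.pow_sub_pow (s.good_odd hq) s.hba h hqa s.hn.ne'] at h2
  split_ifs at h2 <;> omega

lemma good_nonempty (s : Setup a b D z m n k N) : (QQ m n).Nonempty := by
  by_contra hcon
  rw [Finset.not_nonempty_iff_eq_empty] at hcon
  have : m ∣ n := by
    rw [← Nat.factorization_le_iff_dvd s.hm0.ne' s.hn.ne']
    intro q
    by_cases hq : q ∈ m.primeFactors
    · have h1 : q ∉ QQ m n := by rw [hcon]; simp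
      rw [QQ, Finset.mem_filter] at h1
      have hp := Nat.prime_of_mem_primeFactors hq
      rw [Nat.factorization_def _ hp, Nat.factorization_def _ hp]
      push Not at h1
      exact h1 hq
    · rw [← Nat.support_factorization, Finsupp.notMem_support_iff] at hq; rw [hq]
      exact Nat.zero_le _
  have := Nat.le_of_dvd s.hn this
  have := s.hmk
  have := s.hk
  omega

/-- a divisor of m without good prime factors divides k -/
lemma dvd_k (s : Setup a b D z m n k N) (o : ℕ) (ho : o ∣ m) (h : ∀ q ∈ QQ m n, ¬ q ∣ o) :
    o ∣ k := by
  have hon : o ∣ n := by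
    have ho0 : o ≠ 0 := by
      rintro rfl
      have := Nat.eq_zero_of_zero_dvd ho
      have := s.hm0
      omega
    rw [← Nat.factorization_le_iff_dvd ho0 s.hn.ne']
    intro q
    by_cases hq : q ∈ o.primeFactors
    · have hqo := Nat.dvd_of_mem_primeFactors hq
      have hp := Nat.prime_of_mem_primeFactors hq
      have h1 : q ∉ QQ m n := fun hh => h q hh hqo
      rw [QQ, Finset.mem_filter] at h1
      push Not at h1
      have h2 := h1 (Nat.mem_primeFactors.2 ⟨hp, hqo.trans ho, s.hm0.ne'⟩)
      have h3 := (Nat.factorization_le_iff_dvd ho0 s.hm0.ne').2 ho q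
      rw [Nat.factorization_def _ hp, Nat.factorization_def _ hp] at h3 ⊢
      omega
    · rw [← Nat.support_factorization, Finsupp.notMem_support_iff] at hq; rw [hq]
      exact Nat.zero_le _
  have h3 : k = m - n := by have := s.hmk; omega
  rw [h3]
  exact Nat.dvd_sub ho hon

lemma T1_dvd (s : Setup a b D z m n k N) (p : ℕ) (hp : p ∈ N.primeFactors)
    (h : ∀ q ∈ QQ m n, ¬ q ∣ p - 1) : p ∣ z * D * UU a b k := by
  have hpp := Nat.prime_of_mem_primeFactors hp
  have hpZ : Prime (p : ℤ) := Nat.prime_iff_prime_int.1 hpp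
  have hpN := Nat.dvd_of_mem_primeFactors hp
  rw [s.N_eq] at hpN
  by_cases hz : p ∣ z
  · exact (hz.mul_right _).mul_right _
  by_cases hD : p ∣ D
  · exact (hD.mul_left _).mul_right _
  have hU : p ∣ UU a b m := by
    rcases hpp.dvd_mul.1 hpN with h1 | h1
    · rcases hpp.dvd_mul.1 h1 with h2 | h2
      · exact absurd h2 hz
      · exact absurd (hpp.dvd_of_dvd_pow h2) hD
    · exact h1
  apply Dvd.dvd.mul_left
  have h1 : p ∣ a ^ m - b ^ m := by
    rw [← UU_mul a b m s.hba.le]; exact hU.mul_left _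
  obtain ⟨hpa, hpb⟩ := s.not_dvd_ab p m hpp s.hm0 h1
  by_cases hab : p ∣ a - b
  · have habZ : (p : ℤ) ∣ (a : ℤ) - b := by
      have := (s.zdvd p 1).2 (by simpa using hab)
      simpa using this
    have key : ∀ e, p ∣ UU a b e ↔ p ∣ e := by
      intro e
      have h3 := dvd_geom_sum₂_iff_of_dvd_sub (n := e) habZ
      have h4 : (p : ℤ) ∣ (UU a b e : ℤ) ↔ (p : ℤ) ∣ e * (b : ℤ) ^ (e - 1) := by
        rw [← h3, UU]; push_cast; rfl
      have h5 : p ∣ UU a b e ↔ p ∣ e * b ^ (e - 1) := by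
        exact_mod_cast h4
      rw [h5, hpp.dvd_mul]
      constructor
      · rintro (h6 | h6)
        · exact h6
        · exact absurd (hpp.dvd_of_dvd_pow h6) hpb
      · exact Or.inl
    rw [key] at hU ⊢
    apply s.dvd_k p hU
    intro q hq hqp
    have : q = p := (Nat.prime_dvd_prime_iff_eq (s.good_prime hq) hpp).1 hqp
    subst this
    exact s.good_not_dvd hq hab
  · obtain ⟨o, ho, hop⟩ := exists_ord a b p hpp hpb hpa
    simp only [s.zdvd] at ho
    have h2 : o ∣ k := s.dvd_k o ((ho m).1 h1) (fun q hq hqo => h q hq (hqo.trans hop))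
    have h3 := (ho k).2 h2
    rw [← UU_mul a b k s.hba.le] at h3
    exact (hpp.dvd_mul.1 h3).resolve_left hab

lemma zsig_count (s : Setup a b D z m n k N) {q : ℕ} (hq : q ∈ QQ m n) :
    2 ^ ((QQ m n).card - 1) ≤ RR N q := by
  classical
  have hex : ∀ S ∈ ((QQ m n).erase q).powerset, ∃ p, p ∈ N.primeFactors ∧ q ∣ p - 1 ∧
      ∀ e : ℕ, p ∣ a ^ e - b ^ e ↔ (q * ∏ r ∈ S, r) ∣ e := by
    intro S hS
    rw [Finset.mem_powerset] at hS
    have hqS : q ∉ S := fun h => by simpa using hS h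
    have hsub : insert q S ⊆ QQ m n := by
      intro r hr
      rcases Finset.mem_insert.1 hr with h | h
      · rw [h]; exact hq
      · exact Finset.mem_of_mem_erase (hS h)
    have hprod : q * ∏ r ∈ S, r = ∏ r ∈ insert q S, r := by
      rw [Finset.prod_insert hqS]
    have hodd : Odd (∏ r ∈ insert q S, r) := by
      apply Finset.prod_induction _ Odd (fun _ _ => Odd.mul) odd_one
      intro r hr
      exact s.good_odd (hsub hr)
    have hdm : ∏ r ∈ insert q S, r ∣ m := by
      apply Finset.prod_primes_dvd
      · intro r hr; exact (s.good_prime (hsub hr)).prime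
      · intro r hr; exact s.good_dvd (hsub hr)
    have h2 : 2 ≤ q * ∏ r ∈ S, r := by
      have h3 := s.good_three hq
      have h4 : 0 < q * ∏ r ∈ S, r := by rw [hprod]; exact hodd.pos
      have h5 := Nat.le_of_dvd h4 (dvd_mul_right q _)
      omega
    rw [← hprod] at hodd hdm
    obtain ⟨p, hp, hd, h⟩ := s.prim_in _ h2 hodd hdm
    exact ⟨p, hp, (dvd_mul_right _ _).trans hd, h⟩
  choose! f hf using hex
  have hinj : Set.InjOn f (((QQ m n).erase q).powerset : Set (Finset ℕ)) := by
    intro S hS T hT hST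
    have h1 := (hf S hS).2.2
    have h2 := (hf T hT).2.2
    rw [hST] at h1
    have h3 : q * ∏ r ∈ S, r = q * ∏ r ∈ T, r := by
      apply Nat.dvd_antisymm
      · exact (h1 _).1 ((h2 _).2 dvd_rfl)
      · exact (h2 _).1 ((h1 _).2 dvd_rfl)
    have h4 : ∏ r ∈ S, r = ∏ r ∈ T, r :=
      Nat.eq_of_mul_eq_mul_left (s.good_prime hq).pos h3
    have hpr : ∀ V : Finset ℕ, V ∈ ((QQ m n).erase q).powerset →
        (∏ r ∈ V, r).primeFactors = V := by
      intro V hV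
      apply Nat.primeFactors_prod
      intro r hr
      exact s.good_prime (Finset.mem_of_mem_erase (Finset.mem_powerset.1 hV hr))
    rw [← hpr S hS, ← hpr T hT, h4]
  have hc := Finset.card_le_card_of_injOn f (s := ((QQ m n).erase q).powerset)
    (t := N.primeFactors.filter (fun p => q ∣ p - 1)) (by
      intro S hS
      have := hf S hS
      rw [Finset.mem_coe, Finset.mem_filter]
      exact ⟨this.1, this.2.1⟩) hinj
  rw [Finset.card_powerset, Finset.card_erase_of_mem hq] at hc
  exact hc

lemma RR_bound (s : Setup a b D z m n k N) {q : ℕ} (hq : q ∈ QQ m n) :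
    q ^ (RR N q - 1) < k * a ^ ((q - 1) / 2) := by
  have hp := s.good_prime hq
  have := Fact.mk hp
  have h3 := s.good_three hq
  obtain ⟨h, hh⟩ := s.good_odd hq
  have hh1 : (q - 1) / 2 = h := by omega
  have hh0 : 0 < h := by omega
  rw [hh1]
  have ha3 := s.a3
  have hb := s.hb
  have hk := s.hk
  have hba := s.hba
  have hR := s.val_ineq q hp
  have hR1 : RR N q - 1 ≤ padicValNat q (a ^ n - b ^ n) := by
    split_ifs at hR <;> omega
  have hltn : b ^ n < a ^ n := Nat.pow_lt_pow_left hba s.hn.ne'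
  have hah : 1 < a ^ h := Nat.one_lt_pow hh0.ne' (by omega)
  by_cases hqn : q ∣ a ^ n - b ^ n
  · obtain ⟨hqa, hqb⟩ := s.not_dvd_ab q n hp s.hn hqn
    have hcop : ∀ c : ℕ, ¬ q ∣ c → c ^ (q - 1) ≡ 1 [MOD q] := by
      intro c hc
      have := Nat.ModEq.pow_totient ((Nat.Prime.coprime_iff_not_dvd hp).2 hc).symm
      rwa [Nat.totient_prime hp] at this
    have hlt : b ^ (q - 1) < a ^ (q - 1) := Nat.pow_lt_pow_left hba (by omega)
    have hd : q ∣ a ^ (q - 1) - b ^ (q - 1) :=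
      (Nat.modEq_iff_dvd' hlt.le).1 ((hcop b hqb).trans (hcop a hqa).symm)
    have hlte := padicValNat.pow_sub_pow (s.good_odd hq) hlt hd
      (fun h => hqa (hp.dvd_of_dvd_pow h)) s.hn.ne'
    set v := padicValNat q (a ^ (q - 1) - b ^ (q - 1)) with hv
    have hdvd : a ^ n - b ^ n ∣ (a ^ (q - 1)) ^ n - (b ^ (q - 1)) ^ n := by
      rw [← pow_mul, ← pow_mul, mul_comm, pow_mul, pow_mul]
      exact Nat.sub_dvd_pow_sub_pow _ _ _
    have hpos2 : (a ^ (q - 1)) ^ n - (b ^ (q - 1)) ^ n ≠ 0 := by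
      have := Nat.pow_lt_pow_left hlt s.hn.ne'
      omega
    have hv1 : padicValNat q (a ^ n - b ^ n) ≤ v + padicValNat q n := by
      rw [← hlte, ← padicValNat_dvd_iff_le hpos2]
      exact pow_padicValNat_dvd.trans hdvd
    have hkn : q ^ padicValNat q n ≤ k := by
      apply Nat.le_of_dvd hk
      have e1 : q ^ padicValNat q n ∣ n := pow_padicValNat_dvd
      have e2 : q ^ padicValNat q n ∣ m :=
        (pow_dvd_pow q (s.good_val hq).le).trans pow_padicValNat_dvd
      have e3 : k = m - n := by have := s.hmk; omega
      rw [e3]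
      exact Nat.dvd_sub e2 e1
    have hlth : b ^ h < a ^ h := Nat.pow_lt_pow_left hba hh0.ne'
    have hvlt : q ^ v < a ^ h := by
      have hfac : a ^ (q - 1) - b ^ (q - 1) = (a ^ h + b ^ h) * (a ^ h - b ^ h) := by
        have : q - 1 = h * 2 := by omega
        rw [this, pow_mul, pow_mul, Nat.sq_sub_sq]
      have hqv : q ^ v ∣ (a ^ h + b ^ h) * (a ^ h - b ^ h) := by
        rw [← hfac]; exact pow_padicValNat_dvd
      by_cases hc : q ∣ a ^ h - b ^ h
      · have hc2 : ¬ q ∣ a ^ h + b ^ h := by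
          intro hc2
          have hsum : q ∣ 2 * a ^ h := by
            have := Nat.dvd_add hc2 hc
            have e : a ^ h + b ^ h + (a ^ h - b ^ h) = 2 * a ^ h := by omega
            rwa [e] at this
          rcases hp.dvd_mul.1 hsum with h5 | h5
          · have := Nat.le_of_dvd (by norm_num) h5
            omega
          · exact hqa (hp.dvd_of_dvd_pow h5)
        have hcp : Nat.Coprime (q ^ v) (a ^ h + b ^ h) :=
          Nat.Coprime.pow_left _ ((Nat.Prime.coprime_iff_not_dvd hp).2 hc2)
        have := Nat.le_of_dvd (by omega) (hcp.dvd_of_dvd_mul_left hqv)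
        have : 0 < b ^ h := by positivity
        omega
      · have hcp : Nat.Coprime (q ^ v) (a ^ h - b ^ h) :=
          Nat.Coprime.pow_left _ ((Nat.Prime.coprime_iff_not_dvd hp).2 hc)
        have h6 := hcp.dvd_of_dvd_mul_right hqv
        have h7 : 2 ∣ a ^ h + b ^ h := by
          obtain ⟨oa, ob⟩ := s.odd_ab
          exact (oa.pow.add_odd ob.pow).two_dvd
        have hcp2 : Nat.Coprime 2 (q ^ v) :=
          (Nat.coprime_two_left.2 (s.good_odd hq)).pow_right _
        have := Nat.le_of_dvd (by omega) (hcp2.mul_dvd_of_dvd_of_dvd h7 h6)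
        omega
    calc q ^ (RR N q - 1) ≤ q ^ (v + padicValNat q n) :=
          Nat.pow_le_pow_right (by omega) (by omega)
      _ = q ^ padicValNat q n * q ^ v := by rw [pow_add, mul_comm]
      _ ≤ k * q ^ v := Nat.mul_le_mul_right _ hkn
      _ < k * a ^ h := Nat.mul_lt_mul_of_pos_left hvlt hk
  · rw [padicValNat.eq_zero_of_not_dvd hqn] at hR1
    have : RR N q - 1 = 0 := by omega
    rw [this, pow_zero]
    nlinarith

lemma total (s : Setup a b D z m n k N) : ∃ g : ℕ, 1 ≤ g ∧ g.factorial < D ^ 2 * a ^ k ∧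
    Real.log (((D * a) ^ k : ℕ) : ℝ) < Real.log g +
      ∑ q ∈ QQ m n, 3 / (4 * (q : ℝ)) * Real.log ((RR N q : ℝ) + 1) := by
  classical
  have hk := s.hk
  have hba := s.hba
  have hb := s.hb
  have hD := s.hD
  have hz := s.hz
  have hW0 : z * D * UU a b k ≠ 0 := by
    have h1 := UU_mul a b k s.hba.le
    have h2 := s.pow_pos' k hk
    have : UU a b k ≠ 0 := by
      intro h; rw [h] at h1; omega
    positivity
  have hWlt : z * D * UU a b k < D ^ 2 * a ^ k := by
    calc z * D * UU a b k ≤ (D * (a - b)) * D * UU a b k := by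
          gcongr
          exact s.hzD
      _ = D ^ 2 * ((a - b) * UU a b k) := by ring
      _ = D ^ 2 * (a ^ k - b ^ k) := by rw [UU_mul a b k s.hba.le]
      _ < D ^ 2 * a ^ k := by
          apply Nat.mul_lt_mul_of_pos_left
          · have : 0 < b ^ k := by positivity
            have : b ^ k < a ^ k := Nat.pow_lt_pow_left hba hk.ne'
            omega
          · positivity
  set W := z * D * UU a b k with hW
  refine ⟨W.primeFactors.card + 1, by omega, ?_, ?_⟩
  · have h1 := factorial_le_prod W.primeFactors
      (fun p hp => (Nat.prime_of_mem_primeFactors hp).two_le)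
    have h2 := Nat.le_of_dvd (Nat.pos_of_ne_zero hW0) (Nat.prod_primeFactors_dvd W)
    omega
  · refine lt_of_lt_of_le s.log_lt ?_
    have hnn : ∀ p : ℕ, p.Prime → 0 ≤ Real.log ((p : ℝ) / ((p : ℝ) - 1)) := by
      intro p hp
      have h2 : (2 : ℝ) ≤ p := by exact_mod_cast hp.two_le
      apply Real.log_nonneg
      rw [le_div_iff₀ (by linarith)]
      linarith
    have hpt : ∀ p ∈ N.primeFactors, Real.log ((p : ℝ) / ((p : ℝ) - 1)) ≤
        (if p ∈ W.primeFactors then Real.log ((p : ℝ) / ((p : ℝ) - 1)) else 0) +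
        ∑ q ∈ QQ m n, if q ∣ p - 1 then Real.log ((p : ℝ) / ((p : ℝ) - 1)) else 0 := by
      intro p hp
      have hpp := Nat.prime_of_mem_primeFactors hp
      have h0 := hnn p hpp
      have hs0 : ∀ q ∈ QQ m n, 0 ≤ if q ∣ p - 1 then Real.log ((p : ℝ) / ((p : ℝ) - 1)) else 0 := by
        intro q _
        split_ifs
        · exact h0
        · exact le_rfl
      by_cases hg : ∃ q ∈ QQ m n, q ∣ p - 1
      · obtain ⟨q, hq, hqp⟩ := hg
        have h1 := Finset.single_le_sum hs0 hq
        rw [if_pos hqp] at h1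
        have : 0 ≤ (if p ∈ W.primeFactors then Real.log ((p : ℝ) / ((p : ℝ) - 1)) else 0) := by
          split_ifs
          · exact h0
          · exact le_rfl
        linarith
      · push Not at hg
        have h1 := s.T1_dvd p hp hg
        rw [if_pos (Nat.mem_primeFactors.2 ⟨hpp, h1, hW0⟩)]
        have := Finset.sum_nonneg hs0
        linarith
    refine (Finset.sum_le_sum hpt).trans ?_
    rw [Finset.sum_add_distrib, Finset.sum_comm]
    apply add_le_add
    · rw [← Finset.sum_filter]
      have h1 : ∑ p ∈ N.primeFactors.filter (fun p => p ∈ W.primeFactors),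
          Real.log ((p : ℝ) / ((p : ℝ) - 1)) ≤
          ∑ p ∈ W.primeFactors, Real.log ((p : ℝ) / ((p : ℝ) - 1)) := by
        apply Finset.sum_le_sum_of_subset_of_nonneg
        · intro p hp
          exact (Finset.mem_filter.1 hp).2
        · intro p hp _
          exact hnn p (Nat.prime_of_mem_primeFactors hp)
      have h2 := sum_log_primes W.primeFactors
        (fun p hp => (Nat.prime_of_mem_primeFactors hp).two_le)
      push_cast
      linarith
    · apply Finset.sum_le_sum
      intro q hq
      rw [← Finset.sum_filter]
      apply sum_log_primes_mod q (s.good_prime hq).one_le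
      intro p hp
      rw [Finset.mem_filter] at hp
      have hpp := Nat.prime_of_mem_primeFactors hp.1
      refine ⟨hpp.two_le, ?_⟩
      have hqo := s.good_odd hq
      have h3 := s.good_three hq
      apply Nat.Coprime.mul_dvd_of_dvd_of_dvd (Nat.coprime_two_left.2 hqo) _ hp.2
      rcases hpp.eq_two_or_odd with h2 | h2
      · rw [h2] at hp
        have := Nat.le_of_dvd (by norm_num) hp.2
        omega
      · omega

end Setup


lemma log5_lower : (1.6086 : ℝ) ≤ Real.log 5 := by
  have h : Real.log (2 ^ 6 * 3 ^ 5) ≤ Real.log (5 ^ 6) := Real.log_le_log (by norm_num) (by norm_num)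
  rw [Real.log_mul (by norm_num) (by norm_num), Real.log_pow, Real.log_pow, Real.log_pow] at h
  have := Real.log_two_gt_d9
  have := Real.log_three_gt_d9
  push_cast at h
  linarith

lemma log5_upper : Real.log 5 ≤ (1.611 : ℝ) := by
  have h : Real.log (5 ^ 7) ≤ Real.log (2 ^ 2 * 3 ^ 9) := Real.log_le_log (by norm_num) (by norm_num)
  rw [Real.log_mul (by norm_num) (by norm_num), Real.log_pow, Real.log_pow, Real.log_pow] at h
  have := Real.log_two_lt_d9
  have := Real.log_three_lt_d9
  push_cast at h
  linarith

lemma log6_eq : Real.log 6 = Real.log 2 + Real.log 3 := by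
  rw [← Real.log_mul (by norm_num) (by norm_num)]; norm_num

lemma log8_eq : Real.log 8 = 3 * Real.log 2 := by
  have : (8 : ℝ) = 2 ^ 3 := by norm_num
  rw [this, Real.log_pow]; norm_num

lemma log4_eq : Real.log 4 = 2 * Real.log 2 := by
  have : (4 : ℝ) = 2 ^ 2 := by norm_num
  rw [this, Real.log_pow]; norm_num

lemma log9_eq : Real.log 9 = 2 * Real.log 3 := by
  have : (9 : ℝ) = 3 ^ 2 := by norm_num
  rw [this, Real.log_pow]; norm_num

lemma log24_eq : Real.log 24 = 3 * Real.log 2 + Real.log 3 := by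
  have : (24 : ℝ) = 8 * 3 := by norm_num
  rw [this, Real.log_mul (by norm_num) (by norm_num), log8_eq]

lemma log7_lower : (1.93 : ℝ) ≤ Real.log 7 := by
  have h : Real.log (2 ^ 4 * 3) ≤ Real.log (7 ^ 2) := Real.log_le_log (by norm_num) (by norm_num)
  rw [Real.log_mul (by norm_num) (by norm_num), Real.log_pow, Real.log_pow] at h
  have := Real.log_two_gt_d9
  have := Real.log_three_gt_d9
  push_cast at h
  linarith

lemma log11_lower : (2.36 : ℝ) ≤ Real.log 11 := by
  have h : Real.log (2 ^ 5) ≤ Real.log (11 * 3) := Real.log_le_log (by norm_num) (by norm_num)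
  rw [Real.log_mul (by norm_num) (by norm_num), Real.log_pow] at h
  have := Real.log_two_gt_d9
  have := Real.log_three_lt_d9
  push_cast at h
  linarith

lemma c_five (q : ℕ) (hq : 5 ≤ q) : (q : ℝ) - 1 ≤ 0.498 * q * Real.log q := by
  have l2 := Real.log_two_gt_d9
  have l3 := Real.log_three_gt_d9
  rcases Nat.lt_or_ge q 8 with h | h
  · interval_cases q
    · have := log5_lower
      push_cast; linarith
    · have := log6_eq
      push_cast; linarith
    · have := log7_lower
      push_cast; linarith
  · have h8 : (8 : ℝ) ≤ q := by exact_mod_cast h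
    have h1 : Real.log 8 ≤ Real.log q := Real.log_le_log (by norm_num) h8
    rw [log8_eq] at h1
    nlinarith

lemma c_three (q : ℕ) (hq : 3 ≤ q) (hp : q.Prime) : (q : ℝ) - 1 ≤ 0.608 * q * Real.log q := by
  have l3 := Real.log_three_gt_d9
  rcases Nat.lt_or_ge q 5 with h | h
  · interval_cases q
    · push_cast; linarith
    · exact absurd hp (by norm_num)
  · have h1 := c_five q h
    have h5 : (5 : ℝ) ≤ q := by exact_mod_cast h
    have h2 : 0 ≤ Real.log q := Real.log_nonneg (by linarith)
    nlinarith [mul_nonneg (by linarith : (0 : ℝ) ≤ q) h2]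

lemma log_tangent (M M0 : ℝ) (h0 : 0 < M0) (h : 0 < M) : Real.log M ≤ Real.log M0 + (M - M0) / M0 := by
  have h1 := Real.log_le_sub_one_of_pos (div_pos h h0)
  rw [Real.log_div h.ne' h0.ne'] at h1
  have : (M - M0) / M0 = M / M0 - 1 := by field_simp
  linarith

lemma chord (s : ℕ) (hs : 1 ≤ s) (M : ℝ) (hM : (2 : ℝ) ^ (s - 1) + 1 ≤ M) :
    s * Real.log M ≤ 1.32 * M - 1.76 := by
  have l2 := Real.log_two_lt_d9
  have l3 := Real.log_three_lt_d9
  have l5 := log5_upper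
  have hM0 : 0 < M := by
    have : (0 : ℝ) < 2 ^ (s - 1) := by positivity
    linarith
  rcases Nat.lt_or_ge s 5 with h | h
  · interval_cases s
    · have := log_tangent M 2 (by norm_num) hM0
      norm_num at hM
      push_cast; linarith
    · have := log_tangent M 3 (by norm_num) hM0
      norm_num at hM
      push_cast; linarith
    · have := log_tangent M 5 (by norm_num) hM0
      norm_num at hM
      push_cast; linarith
    · have := log_tangent M 9 (by norm_num) hM0
      rw [log9_eq] at this
      norm_num at hM
      push_cast; linarith
  · have hN : 16 * s ^ 2 ≤ 25 * 2 ^ (s - 1) := by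
      clear hM hs
      induction s, h using Nat.le_induction with
      | base => norm_num
      | succ t ht ih =>
        have e : t + 1 - 1 = (t - 1) + 1 := by omega
        rw [e, pow_succ 2 (t - 1)]
        nlinarith
    have hNR : 16 * (s : ℝ) ^ 2 ≤ 25 * 2 ^ (s - 1) := by exact_mod_cast hN
    obtain ⟨P, hP⟩ : ∃ P : ℝ, P = 2 ^ (s - 1) := ⟨_, rfl⟩
    have hs5 : (5 : ℝ) ≤ s := by exact_mod_cast h
    have hsP : (s : ℝ) ≤ P := by
      have : s - 1 < 2 ^ (s - 1) := Nat.lt_two_pow_self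
      have : s ≤ 2 ^ (s - 1) := by omega
      rw [hP]; exact_mod_cast this
    have hlog : Real.log (P + 1) ≤ s * Real.log 2 := by
      rw [← Real.log_pow]
      apply Real.log_le_log (by linarith)
      have e : s = (s - 1) + 1 := by omega
      rw [e, pow_succ, ← hP]
      linarith
    rw [← hP] at hM hNR
    have ht := log_tangent M (P + 1) (by linarith) hM0
    have h1 : s * ((M - (P + 1)) / (P + 1)) ≤ M - (P + 1) := by
      rw [← mul_div_assoc, div_le_iff₀ (by linarith)]
      nlinarith
    have h2 : s * Real.log M ≤ s * (s * Real.log 2) + s * ((M - (P + 1)) / (P + 1)) := by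
      rw [← mul_add]
      apply mul_le_mul_of_nonneg_left _ (by linarith)
      linarith
    have h3 : s * (s * Real.log 2) ≤ 0.7 * (s : ℝ) ^ 2 := by nlinarith [sq_nonneg (s : ℝ)]
    nlinarith

lemma lnF_bound (Q : Finset ℕ) (R : ℕ → ℕ) (q0 : ℕ) (hq0 : q0 ∈ Q) (hmin : ∀ q ∈ Q, q0 ≤ q)
    (h3 : 3 ≤ q0) (c L : ℝ) (hL : 0 ≤ L) (hc : 0 < c) (hcq : ∀ q ∈ Q, (q : ℝ) - 1 ≤ c * q * Real.log q)
    (hb : ∀ q ∈ Q, ((R q : ℝ) - 1) * Real.log q ≤ ((q : ℝ) - 1) / 2 * L)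
    (hM1 : 1 ≤ c * L / 2 * q0) (hZ : 2 ^ (Q.card - 1) ≤ R q0) :
    ∑ q ∈ Q, 3 / (4 * (q : ℝ)) * Real.log ((R q : ℝ) + 1) ≤ 0.66 / q0 + 0.495 * c * L := by
  obtain ⟨lam, hlam⟩ : ∃ l, l = c * L / 2 := ⟨_, rfl⟩
  rw [← hlam] at hM1
  have hlam0 : 0 ≤ lam := by rw [hlam]; positivity
  have hR : ∀ q ∈ Q, (R q : ℝ) ≤ 1 + lam * q := by
    intro q hq
    have hq3 : (3 : ℝ) ≤ q := by exact_mod_cast h3.trans (hmin q hq)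
    have hlog : 0 < Real.log q := Real.log_pos (by linarith)
    have h1 := hb q hq
    have h2 := hcq q hq
    have h4 : ((R q : ℝ) - 1) * Real.log q ≤ lam * q * Real.log q := by
      refine h1.trans ?_
      rw [hlam]
      nlinarith
    have := le_of_mul_le_mul_right h4 hlog
    linarith
  have hq0R : (3 : ℝ) ≤ q0 := by exact_mod_cast h3
  obtain ⟨M, hM⟩ : ∃ M, M = 2 + lam * q0 := ⟨_, rfl⟩
  have hM3 : 3 ≤ M := by linarith
  have hlogM : 1 ≤ Real.log M := by
    rw [Real.le_log_iff_exp_le (by linarith)]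
    have := Real.exp_one_lt_d9
    linarith
  have hterm : ∀ q ∈ Q, 3 / (4 * (q : ℝ)) * Real.log ((R q : ℝ) + 1) ≤
      3 / (4 * (q0 : ℝ)) * Real.log M := by
    intro q hq
    have hqq : (q0 : ℝ) ≤ q := by exact_mod_cast hmin q hq
    have hq3 : (3 : ℝ) ≤ q := by linarith
    have h1 := hR q hq
    obtain ⟨r, hr⟩ : ∃ r : ℝ, r = q / q0 := ⟨_, rfl⟩
    have hr1 : 1 ≤ r := by
      rw [hr, le_div_iff₀ (by linarith)]; linarith
    have hrq : (q : ℝ) = r * q0 := by rw [hr]; field_simp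
    have h2 : (R q : ℝ) + 1 ≤ r * M := by
      rw [hM]
      rw [hrq] at h1
      nlinarith
    have h4 : Real.log ((R q : ℝ) + 1) ≤ r * Real.log M := by
      have e1 : Real.log ((R q : ℝ) + 1) ≤ Real.log (r * M) :=
        Real.log_le_log (by positivity) h2
      rw [Real.log_mul (by linarith) (by linarith)] at e1
      have e2 := Real.log_le_sub_one_of_pos (by linarith : 0 < r)
      nlinarith
    have h5 : 3 / (4 * (q : ℝ)) * Real.log ((R q : ℝ) + 1) ≤ 3 / (4 * (q : ℝ)) * (r * Real.log M) := by
      apply mul_le_mul_of_nonneg_left h4; positivity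
    have h6 : 3 / (4 * (q : ℝ)) * (r * Real.log M) = 3 / (4 * (q0 : ℝ)) * Real.log M := by
      rw [hr]; field_simp
    linarith
  have hsum := Finset.sum_le_sum hterm
  rw [Finset.sum_const, nsmul_eq_mul] at hsum
  have hcard : 1 ≤ Q.card := Finset.card_pos.2 ⟨q0, hq0⟩
  have hch := chord Q.card hcard M (by
    have h1 := hR q0 hq0
    have h2 : (2 : ℝ) ^ (Q.card - 1) ≤ R q0 := by exact_mod_cast hZ
    linarith)
  have h7 : (Q.card : ℝ) * (3 / (4 * (q0 : ℝ)) * Real.log M) ≤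
      3 / (4 * (q0 : ℝ)) * (1.32 * M - 1.76) := by
    have : (Q.card : ℝ) * (3 / (4 * (q0 : ℝ)) * Real.log M) =
      3 / (4 * (q0 : ℝ)) * (Q.card * Real.log M) := by ring
    rw [this]
    apply mul_le_mul_of_nonneg_left hch; positivity
  have h8 : 3 / (4 * (q0 : ℝ)) * (1.32 * M - 1.76) = 0.66 / q0 + 0.99 * lam := by
    rw [hM]; field_simp; ring
  rw [h8, hlam] at h7
  linarith

lemma fact_ge (g : ℕ) (hg : 5 ≤ g) : 2 * g ^ 3 ≤ 3 * g.factorial := by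
  induction g, hg using Nat.le_induction with
  | base => decide
  | succ t ht ih =>
    rw [Nat.factorial_succ]
    have h2 : (t + 1) ^ 2 ≤ t ^ 3 := by nlinarith
    have h3 : 2 * (t + 1) ^ 3 = (t + 1) * (2 * (t + 1) ^ 2) := by ring
    have h4 : 3 * ((t + 1) * t.factorial) = (t + 1) * (3 * t.factorial) := by ring
    rw [h3, h4]
    apply Nat.mul_le_mul_left
    omega

lemma log_nat_ge (X c : ℕ) (hc : 0 < c) (h : c ≤ X) : Real.log (c : ℝ) ≤ Real.log (X : ℝ) :=
  Real.log_le_log (by exact_mod_cast hc) (by exact_mod_cast h)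

lemma numeric (Q : Finset ℕ) (hne : Q.Nonempty) (R : ℕ → ℕ) (a D k g : ℕ) (ha3 : 3 ≤ a)
    (haodd : Odd a) (hD : 1 ≤ D) (hk : 1 ≤ k) (hQ : ∀ q ∈ Q, q.Prime ∧ 3 ≤ q)
    (hR1 : ∀ q ∈ Q, 1 ≤ R q) (hodd : ∀ q ∈ Q, Odd q)
    (hRb : ∀ q ∈ Q, q ^ (R q - 1) < k * a ^ ((q - 1) / 2))
    (hZ : ∀ q ∈ Q, 2 ^ (Q.card - 1) ≤ R q) (hg1 : 1 ≤ g) (hg : g.factorial < D ^ 2 * a ^ k)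
    (hlog : Real.log (((D * a) ^ k : ℕ) : ℝ) < Real.log g +
      ∑ q ∈ Q, 3 / (4 * (q : ℝ)) * Real.log ((R q : ℝ) + 1)) : False := by
  have l2 := Real.log_two_gt_d9
  have l3 := Real.log_three_gt_d9
  have l2' := Real.log_two_lt_d9
  have l3' := Real.log_three_lt_d9
  obtain ⟨X, hX⟩ : ∃ X, X = (D * a) ^ k := ⟨_, rfl⟩
  have hDa : 3 ≤ D * a := by nlinarith
  have hXDa : D * a ≤ X := by rw [hX]; exact Nat.le_self_pow (by omega) _
  have hX3 : 3 ≤ X := by omega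
  have hak : a ≤ a ^ k := Nat.le_self_pow (by omega) _
  have hDk : D ≤ D ^ k := Nat.le_self_pow (by omega) _
  have hX2 : (D ^ 2 * a ^ k) * a ^ k ≤ X ^ 2 := by
    rw [hX, mul_pow]
    calc (D ^ 2 * a ^ k) * a ^ k = D ^ 2 * (a ^ k) ^ 2 := by ring
      _ ≤ (D ^ k) ^ 2 * (a ^ k) ^ 2 := by gcongr
      _ = (D ^ k * a ^ k) ^ 2 := by ring
  have h3g : 3 * g.factorial < X ^ 2 := by
    calc 3 * g.factorial < 3 * (D ^ 2 * a ^ k) := by omega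
      _ ≤ (D ^ 2 * a ^ k) * a ^ k := by
          rw [mul_comm]; apply Nat.mul_le_mul_left; omega
      _ ≤ X ^ 2 := hX2
  rw [← hX] at hlog
  obtain ⟨L, hL⟩ : ∃ L, L = Real.log (X : ℝ) := ⟨_, rfl⟩
  rw [← hL] at hlog
  have hL3 : Real.log 3 ≤ L := by rw [hL]; exact_mod_cast log_nat_ge X 3 (by norm_num) hX3
  have hge : ∀ c : ℕ, 0 < c → c ≤ X → Real.log (c : ℝ) ≤ L := by
    intro c h0 h1; rw [hL]; exact log_nat_ge X c h0 h1
  -- large g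
  have hg5 : 5 ≤ g → Real.log 2 + 3 * Real.log g ≤ 2 * L := by
    intro h5
    have h1 := fact_ge g h5
    have h2 : 2 * g ^ 3 ≤ X ^ 2 := by omega
    have h4 : (2 : ℝ) * (g : ℝ) ^ 3 ≤ (X : ℝ) ^ 2 := by exact_mod_cast h2
    have hg0 : (0 : ℝ) < g := by exact_mod_cast hg1
    have h5 := Real.log_le_log (by positivity) h4
    rw [Real.log_mul (by norm_num) (by positivity), Real.log_pow, Real.log_pow, ← hL] at h5
    push_cast at h5
    exact h5
  have hlg2 : g ≤ 2 → Real.log g ≤ Real.log 2 := by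
    intro h
    apply Real.log_le_log (by exact_mod_cast hg1)
    exact_mod_cast h
  have hlgnn : 0 ≤ Real.log g := Real.log_natCast_nonneg g
  have hg3 : g = 3 → 5 ≤ X := by
    rintro rfl
    norm_num [Nat.factorial] at h3g
    nlinarith
  have hg4 : g = 4 → 9 ≤ X := by
    rintro rfl
    norm_num [Nat.factorial] at h3g
    nlinarith
  have hb : ∀ q ∈ Q, ((R q : ℝ) - 1) * Real.log q ≤ ((q : ℝ) - 1) / 2 * L := by
    intro q hq
    obtain ⟨h, hh⟩ := hodd q hq
    have hq3 := (hQ q hq).2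
    have h1 := hRb q hq
    have hh1 : (q - 1) / 2 = h := by omega
    rw [hh1] at h1
    have hk1 : k ≤ a ^ (k - 1) := by
      have : k - 1 < 2 ^ (k - 1) := Nat.lt_two_pow_self
      have : 2 ^ (k - 1) ≤ a ^ (k - 1) := Nat.pow_le_pow_left (by omega) _
      omega
    have h2 : q ^ (R q - 1) ≤ X ^ h := by
      calc q ^ (R q - 1) ≤ k * a ^ h := h1.le
        _ ≤ a ^ ((k - 1) * h) * a ^ h := by
            apply Nat.mul_le_mul_right
            apply hk1.trans
            apply Nat.pow_le_pow_right (by omega)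
            exact Nat.le_mul_of_pos_right _ (by omega)
        _ = (a ^ k) ^ h := by
            rw [← pow_add, ← pow_mul]; congr 1
            obtain ⟨k', rfl⟩ : ∃ k', k = k' + 1 := ⟨k - 1, by omega⟩
            simp only [Nat.add_sub_cancel]; ring
        _ ≤ X ^ h := by
            apply Nat.pow_le_pow_left
            rw [hX, mul_pow]
            exact Nat.le_mul_of_pos_left _ (by positivity)
    have h4 : (q : ℝ) ^ (R q - 1) ≤ (X : ℝ) ^ h := by exact_mod_cast h2
    have hq0 : (0 : ℝ) < q := by exact_mod_cast (by omega : 0 < q)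
    have h5 := Real.log_le_log (by positivity) h4
    rw [Real.log_pow, Real.log_pow, ← hL, Nat.cast_sub (hR1 q hq)] at h5
    have e : ((q : ℝ) - 1) / 2 = h := by rw [hh]; push_cast; ring
    rw [e]
    exact_mod_cast h5
  by_cases hQ3 : 3 ∈ Q
  · -- q0 = 3
    have hF := lnF_bound Q R 3 hQ3 (fun q hq => (hQ q hq).2) le_rfl 0.608 L (by linarith)
      (by norm_num) (fun q hq => c_three q (hQ q hq).2 (hQ q hq).1) hb
      (by push_cast; linarith) (hZ 3 hQ3)
    push_cast at hF
    rcases Nat.lt_or_ge g 5 with hg' | hg'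
    swap
    · have := hg5 hg'
      linarith
    rcases Nat.lt_or_ge (R 3) 2 with hR2 | hR2
    · have hR31 : R 3 = 1 := by have := hR1 3 hQ3; omega
      have hcard : Q.card = 1 := by
        have h1 := hZ 3 hQ3
        rw [hR31] at h1
        have h2 : Q.card - 1 < 2 ^ (Q.card - 1) := Nat.lt_two_pow_self
        have h3 : 0 < Q.card := Finset.card_pos.2 hne
        omega
      obtain ⟨q, hq⟩ := Finset.card_eq_one.1 hcard
      have hq3 : q = 3 := by
        rw [hq] at hQ3
        exact (Finset.mem_singleton.1 hQ3).symm
      rw [hq, hq3, Finset.sum_singleton, hR31] at hlog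
      norm_num at hlog
      have : g ≤ 2 ∨ g = 3 ∨ g = 4 := by omega
      rcases this with h | h | h
      · have := hlg2 h
        linarith
      · have h5 := hge 5 (by norm_num) (hg3 h)
        have := log5_lower
        subst h
        push_cast at *
        linarith
      · have h5 := hge 9 (by norm_num) (hg4 h)
        have := log9_eq
        have := log4_eq
        subst h
        push_cast at *
        linarith
    · have hka : 3 < k * a := by
        have h1 := hRb 3 hQ3
        norm_num at h1
        have h2 : 3 ^ 1 ≤ 3 ^ (R 3 - 1) := Nat.pow_le_pow_right (by norm_num) (by omega)
        omega
      have hX9 : 2 ≤ k → 9 ≤ X := by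
        intro h2
        calc 9 = 3 ^ 2 := by norm_num
          _ ≤ (D * a) ^ 2 := Nat.pow_le_pow_left hDa 2
          _ ≤ (D * a) ^ k := Nat.pow_le_pow_right (by omega) h2
          _ = X := hX.symm
      have ha5 : k = 1 → 5 ≤ a := by
        intro h1
        rw [h1] at hka
        obtain ⟨t, ht⟩ := haodd
        omega
      have hX5 : 5 ≤ X := by
        rcases Nat.lt_or_ge k 2 with h | h
        · have := ha5 (by omega)
          nlinarith
        · have := hX9 h
          omega
      have hcase : g ≤ 2 ∨ g = 3 ∨ g = 4 := by omega
      by_cases hA : D = 1 ∨ 2 ≤ k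
      · have hDX : D ^ 2 * a ^ k ≤ X := by
          rw [hX, mul_pow]
          apply Nat.mul_le_mul_right
          rcases hA with h | h
          · rw [h]; simp
          · exact Nat.pow_le_pow_right (by omega) h
        rcases hcase with h | h | h
        · have := hlg2 h
          have h5 := hge 5 (by norm_num) hX5
          have := log5_lower
          push_cast at *
          linarith
        · subst h
          norm_num [Nat.factorial] at hg
          have h5 := hge 7 (by norm_num) (by omega)
          have := log7_lower
          push_cast at *
          linarith
        · subst h
          norm_num [Nat.factorial] at hg
          have h5 := hge 24 (by norm_num) (by omega)
          have := log24_eq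
          have := log4_eq
          push_cast at *
          linarith
      · push Not at hA
        have hk1 : k = 1 := by omega
        have ha := ha5 hk1
        have hD2 : 2 ≤ D := by omega
        have hX10 : 10 ≤ X := by nlinarith
        rcases hcase with h | h | h
        · have := hlg2 h
          have h5 := hge 9 (by norm_num) (by omega)
          have := log9_eq
          push_cast at *
          linarith
        · subst h
          have h5 := hge 9 (by norm_num) (by omega)
          have := log9_eq
          push_cast at *
          linarith
        · subst h
          norm_num [Nat.factorial] at hg
          rw [hk1, pow_one] at hX2 hg
          have h5 := hge 11 (by norm_num) (by nlinarith)
          have := log11_lower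
          have := log4_eq
          push_cast at *
          linarith
  · have hQ5 : ∀ q ∈ Q, 5 ≤ q := by
      intro q hq
      have h1 := (hQ q hq).2
      obtain ⟨t, ht⟩ := hodd q hq
      have : q ≠ 3 := by rintro rfl; exact hQ3 hq
      omega
    obtain ⟨q0, hq0, hmin⟩ := Finset.exists_min_image Q id hne
    simp only [id] at hmin
    have h5 := hQ5 q0 hq0
    have h5R : (5 : ℝ) ≤ q0 := by exact_mod_cast h5
    have hF := lnF_bound Q R q0 hq0 hmin (by omega) 0.498 L (by linarith)
      (by norm_num) (fun q hq => c_five q (hQ5 q hq)) hb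
      (by nlinarith) (hZ q0 hq0)
    have hF2 : 0.66 / (q0 : ℝ) ≤ 0.132 := by
      rw [div_le_iff₀ (by linarith)]; linarith
    have hcase : g ≤ 2 ∨ g = 3 ∨ g = 4 ∨ 5 ≤ g := by omega
    rcases hcase with h | h | h | h
    · have := hlg2 h
      linarith
    · have hX6 : 6 ≤ X := by
        have hx5 := hg3 h
        by_contra hcon
        have hXe : X = 5 := by omega
        rcases Nat.lt_or_ge k 2 with hk2 | hk2
        · have hk1 : k = 1 := by omega
          subst hk1
          rw [pow_one] at hX hg hX2
          subst h
          norm_num [Nat.factorial] at hg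
          rw [hXe] at hX
          have hD1 : D = 1 := by nlinarith
          subst hD1
          omega
        · have : (D * a) ^ 2 ≤ (D * a) ^ k := Nat.pow_le_pow_right (by omega) hk2
          rw [← hX] at this
          nlinarith
      have h6 := hge 6 (by norm_num) hX6
      have := log6_eq
      subst h
      push_cast at *
      linarith
    · have h6 := hge 9 (by norm_num) (hg4 h)
      have := log9_eq
      have := log4_eq
      subst h
      push_cast at *
      linarith
    · have := hg5 h
      linarith


lemma Setup.false {a b D z m n k N : ℕ} (s : Setup a b D z m n k N) : False := by
  obtain ⟨g, hg1, hg, hlog⟩ := s.total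
  have ha := s.a3
  have hb := s.hb
  exact numeric (QQ m n) s.good_nonempty (RR N) a D k g (by omega) s.odd_ab.1 s.hD s.hk
    (fun q hq => ⟨s.good_prime hq, s.good_three hq⟩) (fun q hq => s.RR_pos hq)
    (fun q hq => s.good_odd hq) (fun q hq => s.RR_bound hq) (fun q hq => s.zsig_count hq)
    hg1 hg hlog

lemma quot_mul (x y e : ℕ) : (x - y) * ((x ^ e - y ^ e) / (x - y)) = x ^ e - y ^ e :=
  Nat.mul_div_cancel' (Nat.sub_dvd_pow_sub_pow x y e)

theorem phi_eq_general (x y z m n : ℕ) (hx : 0 < x) (hy : 0 < y) (hz : 0 < z)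
    (hm : 0 < m) (hn : 0 < n) (hxy : y < x) (hzxy : z ≤ x - y)
    (heq : Nat.totient (z * ((x ^ m - y ^ m) / (x - y))) =
      z * ((x ^ n - y ^ n) / (x - y))) :
    z = 1 ∧ m = 1 ∧ n = 1 := by
  have hxy0 : 0 < x - y := by omega
  rcases lt_trichotomy n m with hnm | hnm | hnm
  · exfalso
    obtain ⟨D, a, b, hD, hcop, hxa, hyb⟩ :
        ∃ D a b : ℕ, 0 < D ∧ Nat.Coprime a b ∧ x = D * a ∧ y = D * b := by
      obtain ⟨g, a, b, hg, hc, h1, h2⟩ := Nat.exists_coprime' (m := x) (n := y)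
        (Nat.gcd_pos_of_pos_left _ hx)
      exact ⟨g, a, b, hg, hc, by rw [h1, mul_comm], by rw [h2, mul_comm]⟩
    have hfac : ∀ e : ℕ, 0 < e → (a - b) * (z * ((x ^ e - y ^ e) / (x - y))) =
        z * D ^ (e - 1) * (a ^ e - b ^ e) := by
      intro e he
      have h1 := quot_mul x y e
      have h2 : x - y = D * (a - b) := by rw [hxa, hyb, Nat.mul_sub]
      have h3 : x ^ e - y ^ e = D * (D ^ (e - 1) * (a ^ e - b ^ e)) := by
        rw [hxa, hyb, mul_pow, mul_pow, ← Nat.mul_sub, ← mul_assoc]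
        congr 1
        rw [← pow_succ']
        congr 1
        omega
      apply Nat.eq_of_mul_eq_mul_left hD
      calc D * ((a - b) * (z * ((x ^ e - y ^ e) / (x - y))))
          = z * ((D * (a - b)) * ((x ^ e - y ^ e) / (x - y))) := by ring
        _ = z * (x ^ e - y ^ e) := by rw [← h2, h1]
        _ = _ := by rw [h3]; ring
    have s : Setup a b D z m n (m - n) (z * ((x ^ m - y ^ m) / (x - y))) :=
      { cop := hcop
        hb := by
          rcases Nat.eq_zero_or_pos b with h | h
          · rw [h] at hyb; omega
          · exact h
        hba := by
          rw [hxa, hyb] at hxy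
          exact Nat.lt_of_mul_lt_mul_left hxy
        hD := hD
        hz := hz
        hzD := by rw [Nat.mul_sub, ← hxa, ← hyb]; exact hzxy
        hn := hn
        hk := by omega
        hmk := by omega
        hNm := hfac m hm
        hNn := by rw [heq]; exact hfac n hn }
    exact s.false
  · subst hnm
    have hN1 : z * ((x ^ n - y ^ n) / (x - y)) = 1 := by
      by_contra hne
      have hpos : 0 < z * ((x ^ n - y ^ n) / (x - y)) := by
        have h1 := quot_mul x y n
        have h2 : y ^ n < x ^ n := Nat.pow_lt_pow_left hxy hn.ne'
        have : (x ^ n - y ^ n) / (x - y) ≠ 0 := by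
          intro h; rw [h] at h1; omega
        positivity
      have := Nat.totient_lt (z * ((x ^ n - y ^ n) / (x - y))) (by omega)
      omega
    have hz1 : z = 1 := Nat.eq_one_of_mul_eq_one_right hN1
    have hU1 : (x ^ n - y ^ n) / (x - y) = 1 := Nat.eq_one_of_mul_eq_one_left hN1
    have hn1 : n = 1 := by
      by_contra hne
      have h1 := quot_mul x y n
      rw [hU1, mul_one] at h1
      have h2 : n = (n - 1) + 1 := by omega
      have h3 : y ^ (n - 1) < x ^ (n - 1) := Nat.pow_lt_pow_left hxy (by omega)
      have h4 : 1 ≤ y ^ (n - 1) := Nat.one_le_pow _ _ hy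
      rw [h2, pow_succ, pow_succ] at h1
      have h5 : y ^ (n - 1) * y + x ≤ x ^ (n - 1) * x + y := by nlinarith
      have h6 : y ^ (n - 1) * y + x < x ^ (n - 1) * x + y := by nlinarith
      omega
    exact ⟨hz1, hn1, hn1⟩
  · exfalso
    have h1 := quot_mul x y n
    have h2 := quot_mul x y m
    have hlt : x ^ m - y ^ m < x ^ n - y ^ n := by
      obtain ⟨j, hj⟩ : ∃ j, n = m + j := ⟨n - m, by omega⟩
      have h3 : y ^ m < x ^ m := Nat.pow_lt_pow_left hxy hm.ne'
      have h4 : y ^ j < x ^ j := Nat.pow_lt_pow_left hxy (by omega)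
      have h5 : 1 ≤ y ^ j := Nat.one_le_pow _ _ hy
      have h6 : y ^ m * y ^ j + x ^ m < x ^ m * x ^ j + y ^ m := by
        generalize x ^ m = A at *
        generalize y ^ m = B at *
        generalize x ^ j = P at *
        generalize y ^ j = S at *
        obtain ⟨u, rfl⟩ : ∃ u, A = B + 1 + u := ⟨A - B - 1, by omega⟩
        obtain ⟨v, rfl⟩ : ∃ v, P = S + 1 + v := ⟨P - S - 1, by omega⟩
        obtain ⟨w, rfl⟩ : ∃ w, S = 1 + w := ⟨S - 1, by omega⟩
        ring_nf
        nlinarith [Nat.zero_le (B * v), Nat.zero_le (u * v), Nat.zero_le (u * w)]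
      rw [hj, pow_add, pow_add]
      omega
    have h7 : (x ^ m - y ^ m) / (x - y) < (x ^ n - y ^ n) / (x - y) := by
      rw [← h1, ← h2] at hlt
      exact Nat.lt_of_mul_lt_mul_left hlt
    have h8 := Nat.totient_le (z * ((x ^ m - y ^ m) / (x - y)))
    rw [heq] at h8
    have := Nat.le_of_mul_le_mul_left h8 hz
    omega
end
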